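/- arXiv:1509.07067 — 8 statements merged into one kernel-verified Lean document; each statement's English description precedes it below -/
import Mathlib

section
/- Let R be a commutative unital ring and let (C_k, d_i^+, d_i^-, s_i) be a weak skew cubical structure in R-modules. Fix α, β ∈ R and set ∂_k := α·∑_{i=1}^{k}(−1)^{i−1} d_i^+ + β·∑_{i=1}^{k}(−1)^{i−1} d_i^-. Then the submodules C_k^D := ∑_{i=1}^{k−1} range(s_i : C_{k−1} → C_k) satisfy ∂_k(C_k^D) ⊆ C_{k−1}^D; that is, the degenerate parts form a subcomplex of (C_k, ∂_k). -/
/-- The degenerate submodule `C_k^D = ∑_{i=1}^{k-1} Im(s_i : C_{k-1} → C_k)`.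
Here `s k i : C (k+1) → C (k+2)` corresponds to the classical degeneracy
`s_i : C_{k+1} → C_{k+2}`, `1 ≤ i ≤ k+1`. -/
def degSub {R : Type*} [CommRing R] {C : ℕ → Type*}
    [∀ k, AddCommGroup (C k)] [∀ k, Module R (C k)]
    (s : (k : ℕ) → ℕ → (C (k + 1) →ₗ[R] C (k + 2))) : (k : ℕ) → Submodule R (C k)
  | 0 => ⊥
  | 1 => ⊥
  | (k + 2) => ⨆ i ∈ Finset.Icc 1 (k + 1), LinearMap.range (s k i)

/-!
In `∂ (s_j x) = ∑ ± d_i (s_j x)` the terms `i = j` and `i = j + 1` are equal and carry opposite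
signs, so they cancel; in every other term the face can be moved past the degeneracy, which leaves
an element of the image of `s_{j-1}` or `s_j`.
-/

section AlternatingSum

variable {R M : Type*} [Ring R] [AddCommGroup M] [Module R M]

theorem sum_neg_one_pow_smul_mem_of_eq_succ {N : Submodule R M} {f : ℕ → M} {n j : ℕ}
    (hj : j + 1 < n) (hf : f j = f (j + 1)) (hN : ∀ i < n, i ≠ j → i ≠ j + 1 → f i ∈ N) :
    ∑ i ∈ Finset.range n, (-1 : R) ^ i • f i ∈ N := by
  have hpair : ({j, j + 1} : Finset ℕ) ⊆ Finset.range n := by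
    simp only [Finset.insert_subset_iff, Finset.singleton_subset_iff, Finset.mem_range]
    omega
  have hcancel : ∑ i ∈ {j, j + 1}, (-1 : R) ^ i • f i = 0 := by
    rw [Finset.sum_pair (by omega), hf, ← add_smul, pow_succ, mul_neg_one, add_neg_cancel,
      zero_smul]
  rw [← Finset.sum_sdiff hpair, hcancel, add_zero]
  refine N.sum_mem fun i hi => N.smul_mem _ ?_
  simp only [Finset.mem_sdiff, Finset.mem_range, Finset.mem_insert, Finset.mem_singleton,
    not_or] at hi
  exact hN i hi.1 hi.2.1 hi.2.2

end AlternatingSum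

section WeakSkewCubical

variable {R : Type*} [CommRing R] {C : ℕ → Type*} [∀ k, AddCommGroup (C k)] [∀ k, Module R (C k)]

theorem degeneracy_mem_degSub (s : (k : ℕ) → ℕ → (C (k + 1) →ₗ[R] C (k + 2))) {k j : ℕ}
    (hj : 1 ≤ j) (hjk : j ≤ k + 1) (x : C (k + 1)) : s k j x ∈ degSub s (k + 2) :=
  Submodule.mem_iSup_of_mem j <|
    Submodule.mem_iSup_of_mem (Finset.mem_Icc.2 ⟨hj, hjk⟩) (LinearMap.mem_range_self _ x)

theorem degSub_le {s : (k : ℕ) → ℕ → (C (k + 1) →ₗ[R] C (k + 2))} {k : ℕ}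
    {N : Submodule R (C (k + 2))}
    (hN : ∀ j, 1 ≤ j → j ≤ k + 1 → ∀ x, s k j x ∈ N) : degSub s (k + 2) ≤ N := by
  refine iSup₂_le fun j hj => ?_
  rintro _ ⟨x, rfl⟩
  exact hN j (Finset.mem_Icc.1 hj).1 (Finset.mem_Icc.1 hj).2 x

/-- The alternating sum `∑_{i=1}^{k+1} (-1)^{i-1} d_i : C_{k+1} → C_k` of a family of face maps,
with the summation index shifted to start at `0`. -/
def alternatingFaceSum (d : (k : ℕ) → ℕ → (C (k + 1) →ₗ[R] C k)) (k : ℕ) : C (k + 1) →ₗ[R] C k :=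
  ∑ i ∈ Finset.range (k + 1), (-1 : R) ^ i • d k (i + 1)

/-- The relations that a weak skew cubical structure imposes between its degeneracies `s` and the
faces `d` of one sign. As in `degSub`, `d k i` and `s k i` start in `C (k + 1)`, and only the
indices `1 ≤ i ≤ k + 1` are constrained. -/
structure IsWeakSkew (d : (k : ℕ) → ℕ → (C (k + 1) →ₗ[R] C k))
    (s : (k : ℕ) → ℕ → (C (k + 1) →ₗ[R] C (k + 2))) : Prop where
  face_comp_degeneracy_of_lt : ∀ k i j : ℕ, 1 ≤ i → i < j → j ≤ k + 2 →
    (d (k + 2) i).comp (s (k + 1) j) = (s k (j - 1)).comp (d (k + 1) i)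
  face_comp_degeneracy_of_succ_lt : ∀ k i j : ℕ, 1 ≤ j → j + 1 < i → i ≤ k + 3 →
    (d (k + 2) i).comp (s (k + 1) j) = (s k j).comp (d (k + 1) (i - 1))
  face_comp_degeneracy_self : ∀ k i : ℕ, 1 ≤ i → i ≤ k + 1 →
    (d (k + 1) i).comp (s k i) = (d (k + 1) (i + 1)).comp (s k i)

namespace IsWeakSkew

variable {d : (k : ℕ) → ℕ → (C (k + 1) →ₗ[R] C k)}
  {s : (k : ℕ) → ℕ → (C (k + 1) →ₗ[R] C (k + 2))}

theorem face_degeneracy_mem_degSub (h : IsWeakSkew d s) {k i j : ℕ} (hi : 1 ≤ i)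
    (hik : i ≤ k + 2) (hj : 1 ≤ j) (hjk : j ≤ k + 1) (hij : i ≠ j) (hij' : i ≠ j + 1)
    (x : C (k + 1)) : d (k + 1) i (s k j x) ∈ degSub s (k + 1) := by
  cases k with
  | zero => omega
  | succ k =>
    rcases lt_or_gt_of_ne hij with hlt | hgt
    · have hswap : d (k + 2) i (s (k + 1) j x) = s k (j - 1) (d (k + 1) i x) :=
        LinearMap.congr_fun (h.face_comp_degeneracy_of_lt k i j hi hlt hjk) x
      rw [hswap]
      exact degeneracy_mem_degSub s (by omega) (by omega) _
    · have hswap : d (k + 2) i (s (k + 1) j x) = s k j (d (k + 1) (i - 1) x) :=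
        LinearMap.congr_fun (h.face_comp_degeneracy_of_succ_lt k i j hj (by omega) hik) x
      rw [hswap]
      exact degeneracy_mem_degSub s hj (by omega) _

theorem alternatingFaceSum_degeneracy_mem_degSub (h : IsWeakSkew d s) {k j : ℕ} (hj : 1 ≤ j)
    (hjk : j ≤ k + 1) (x : C (k + 1)) :
    alternatingFaceSum d (k + 1) (s k j x) ∈ degSub s (k + 1) := by
  obtain ⟨j, rfl⟩ := Nat.exists_eq_add_of_le' hj
  simp only [alternatingFaceSum, LinearMap.sum_apply, LinearMap.smul_apply]
  have hadjacent : d (k + 1) (j + 1) (s k (j + 1) x) = d (k + 1) (j + 1 + 1) (s k (j + 1) x) :=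
    LinearMap.congr_fun (h.face_comp_degeneracy_self k (j + 1) hj hjk) x
  exact sum_neg_one_pow_smul_mem_of_eq_succ (by omega) hadjacent fun i hi hij hij' =>
    h.face_degeneracy_mem_degSub (by omega) (by omega) hj hjk (by omega) (by omega) x

theorem map_alternatingFaceSum_degSub_le (h : IsWeakSkew d s) (k : ℕ) :
    (degSub s (k + 1)).map (alternatingFaceSum d k) ≤ degSub s k := by
  cases k with
  | zero => exact (Submodule.map_bot _).le
  | succ k =>
    exact Submodule.map_le_iff_le_comap.2 <| degSub_le fun _ hj hjk x =>
      h.alternatingFaceSum_degeneracy_mem_degSub hj hjk x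

end IsWeakSkew

theorem statement_1_general {dp dm : (k : ℕ) → ℕ → (C (k + 1) →ₗ[R] C k)}
    {s : (k : ℕ) → ℕ → (C (k + 1) →ₗ[R] C (k + 2))} (hp : IsWeakSkew dp s)
    (hm : IsWeakSkew dm s) (α β : R) (k : ℕ) :
    (degSub s (k + 1)).map (α • alternatingFaceSum dp k + β • alternatingFaceSum dm k)
      ≤ degSub s k := by
  rintro _ ⟨x, hx, rfl⟩
  exact add_mem
    (Submodule.smul_mem _ α (hp.map_alternatingFaceSum_degSub_le k (Submodule.mem_map_of_mem hx)))
    (Submodule.smul_mem _ β (hm.map_alternatingFaceSum_degSub_le k (Submodule.mem_map_of_mem hx)))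

end WeakSkewCubical

/-- For a weak skew cubical structure in `R`-modules, the degenerate
parts `C_k^D = ∑_{i=1}^{k-1} Im s_i` form a subcomplex of `(C_k, ∂_k^{(α,β)})`. -/
theorem statement_1 {R : Type*} [CommRing R] (C : ℕ → Type*)
    [∀ k, AddCommGroup (C k)] [∀ k, Module R (C k)]
    (dp dm : (k : ℕ) → ℕ → (C (k + 1) →ₗ[R] C k))
    (s : (k : ℕ) → ℕ → (C (k + 1) →ₗ[R] C (k + 2)))
    (hpre : ∀ (ε ζ : Bool) (k i j : ℕ), 1 ≤ i → i < j → j ≤ k + 2 →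
      ((cond ε dp dm) k i).comp ((cond ζ dp dm) (k + 1) j)
        = ((cond ζ dp dm) k (j - 1)).comp ((cond ε dp dm) (k + 1) i))
    (hds1 : ∀ (ε : Bool) (k i j : ℕ), 1 ≤ i → i < j → j ≤ k + 2 →
      ((cond ε dp dm) (k + 2) i).comp (s (k + 1) j)
        = (s k (j - 1)).comp ((cond ε dp dm) (k + 1) i))
    (hds2 : ∀ (ε : Bool) (k i j : ℕ), 1 ≤ j → j + 1 < i → i ≤ k + 3 →
      ((cond ε dp dm) (k + 2) i).comp (s (k + 1) j)
        = (s k j).comp ((cond ε dp dm) (k + 1) (i - 1)))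
    (hds3 : ∀ (ε : Bool) (k i : ℕ), 1 ≤ i → i ≤ k + 1 →
      ((cond ε dp dm) (k + 1) i).comp (s k i)
        = ((cond ε dp dm) (k + 1) (i + 1)).comp (s k i))
    (α β : R)
    (D : (k : ℕ) → C (k + 1) →ₗ[R] C k)
    (hD : ∀ k, D k
        = α • (∑ i ∈ Finset.range (k + 1), ((-1 : R) ^ i) • dp k (i + 1))
        + β • (∑ i ∈ Finset.range (k + 1), ((-1 : R) ^ i) • dm k (i + 1))) :
    ∀ k, Submodule.map (D k) (degSub s (k + 1)) ≤ degSub s k := by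
  intro k
  rw [hD]
  exact statement_1_general ⟨hds1 true, hds2 true, hds3 true⟩
    ⟨hds1 false, hds2 false, hds3 false⟩ α β k
end

section
/- Let R be a commutative unital ring and let (C_k, d_i^+, d_i^-, s_i) be a semi-strong skew cubical structure in R-modules. Define η_k := (Id − s_1∘d_2^+)∘(Id − s_2∘d_3^+)∘⋯∘(Id − s_{k−1}∘d_k^+) : C_k → C_k, and set C_k^D := ∑_{i=1}^{k−1} range(s_i : C_{k−1} → C_k) and C_k^N := range(η_k). Then C_k is the internal direct sum C_k^D ⊕ C_k^N of R-submodules, and for every α, β ∈ R the differential ∂_k := α·∑_{i=1}^{k}(−1)^{i−1} d_i^+ + β·∑_{i=1}^{k}(−1)^{i−1} d_i^- maps C_k^D into C_{k−1}^D and C_k^N into C_{k−1}^N. -/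
/-- The map `η_k = (Id - s_1 d_2^+)(Id - s_2 d_3^+) ⋯ (Id - s_{k-1} d_k^+) : C_k → C_k`
(trivial for `k = 0, 1`). -/
def etaMap {R : Type*} [CommRing R] {C : ℕ → Type*}
    [∀ k, AddCommGroup (C k)] [∀ k, Module R (C k)]
    (dp : (k : ℕ) → ℕ → (C (k + 1) →ₗ[R] C k))
    (s : (k : ℕ) → ℕ → (C (k + 1) →ₗ[R] C (k + 2))) : (k : ℕ) → (C k →ₗ[R] C k)
  | 0 => LinearMap.id
  | 1 => LinearMap.id
  | (k + 2) => (List.range (k + 1)).foldl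
      (fun acc i =>
        acc.comp (LinearMap.id - (s k (i + 1)).comp (dp (k + 1) (i + 2))))
      LinearMap.id

/-!
Put `e_i := s_i d_{i+1}^+`, so that `η_k = (1 - e_1) ⋯ (1 - e_{k-1})`. The `e_i` are idempotents,
and for `i < j` the skew cubical relations show that `e_j` preserves the range of `s_i` and that
`e_i` preserves the kernel of `d_{j+1}^+`; in the endomorphism ring this reads
`e_i e_j e_i = e_j e_i = e_j e_i e_j`. These identities alone force `e_j η_k = 0 = η_k e_j`. Hence
`η_k` is the projection onto `⋂_{j ≥ 2} ker d_j^+` along `C_k^D`. All faces preserve this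
intersection. The faces of a degenerate element `s_j z` are degenerate apart from the `j`-th and
`(j+1)`-st, which agree and so cancel in the alternating sum.
-/

section ComplProd

variable {A : Type*} [Ring A] {e : ℕ → A} {n : ℕ}

/-- The ordered product `(1 - e 0) * (1 - e 1) * ⋯ * (1 - e (n - 1))` in a noncommutative ring,
of which `etaMap` is an instance. -/
def complProd (e : ℕ → A) (n : ℕ) : A :=
  ((List.range n).map fun i => 1 - e i).prod

theorem complProd_zero (e : ℕ → A) : complProd e 0 = 1 := rfl

theorem complProd_succ (e : ℕ → A) (n : ℕ) :
    complProd e (n + 1) = complProd e n * (1 - e n) :=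
  List.prod_range_succ _ n

theorem mul_complProd_mul_self {a : A} (ha : IsIdempotentElem a)
    (h : ∀ i < n, a * e i * a = a * e i) : a * complProd e n * a = a * complProd e n := by
  induction n with
  | zero => simpa only [complProd_zero, mul_one] using ha.eq
  | succ n ih =>
    have absorb : a * complProd e n * a = a * complProd e n :=
      ih fun i hi => h i (by omega)
    have factor : a * (1 - e n) * a = a * (1 - e n) := by
      rw [mul_sub, sub_mul, mul_one, ha.eq, h n n.lt_succ_self]
    calc a * complProd e (n + 1) * a
        = a * complProd e n * (1 - e n) * a := by rw [complProd_succ, ← mul_assoc a]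
      _ = a * complProd e n * (a * (1 - e n) * a) := by
          rw [← mul_assoc, ← mul_assoc, absorb]
      _ = a * complProd e n * (1 - e n) := by rw [factor, ← mul_assoc, absorb]
      _ = a * complProd e (n + 1) := by rw [complProd_succ, mul_assoc]

theorem mul_complProd_eq_zero (hidem : ∀ i < n, IsIdempotentElem (e i))
    (h : ∀ i j, i < j → j < n → e j * e i * e j = e j * e i) {j : ℕ} (hj : j < n) :
    e j * complProd e n = 0 := by
  induction n with
  | zero => omega
  | succ n ih =>
    rw [complProd_succ, ← mul_assoc]
    obtain hlt | rfl := Nat.lt_succ_iff_lt_or_eq.mp hj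
    · rw [ih (fun i hi => hidem i (by omega)) (fun i j hij hj => h i j hij (by omega)) hlt,
        zero_mul]
    · rw [mul_sub, mul_one,
        mul_complProd_mul_self (hidem j hj) fun i hi => h i j hi hj, sub_self]

theorem complProd_mul_eq_zero (hidem : ∀ i < n, IsIdempotentElem (e i))
    (h : ∀ i j, i < j → j < n → e i * e j * e i = e j * e i) {j : ℕ} (hj : j < n) :
    complProd e n * e j = 0 := by
  induction n with
  | zero => omega
  | succ n ih =>
    rw [complProd_succ, mul_assoc, sub_mul, one_mul]
    obtain hlt | rfl := Nat.lt_succ_iff_lt_or_eq.mp hj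
    · have kill : complProd e n * e j = 0 :=
        ih (fun i hi => hidem i (by omega)) (fun i j hij hj => h i j hij (by omega)) hlt
      rw [mul_sub, kill, ← h j n hlt n.lt_succ_self, mul_assoc, ← mul_assoc (complProd e n), kill,
        zero_mul, sub_zero]
    · rw [(hidem j hj).eq, sub_self, mul_zero]

variable {R M : Type*} [Ring R] [AddCommGroup M] [Module R M] {f : ℕ → Module.End R M}

theorem complProd_apply_of_forall_apply_eq_zero {x : M} (h : ∀ i < n, f i x = 0) :
    complProd f n x = x := by
  induction n with
  | zero => rfl
  | succ n ih =>
    rw [complProd_succ, Module.End.mul_apply, LinearMap.sub_apply, h n n.lt_succ_self, sub_zero]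
    exact ih fun i hi => h i (by omega)

theorem sub_complProd_apply_mem {N : Submodule R M} (h : ∀ i < n, ∀ x, f i x ∈ N) (x : M) :
    x - complProd f n x ∈ N := by
  induction n generalizing x with
  | zero => simp [complProd_zero]
  | succ n ih =>
    have split : x - complProd f (n + 1) x
        = f n x + ((x - f n x) - complProd f n (x - f n x)) := by
      rw [complProd_succ, Module.End.mul_apply, LinearMap.sub_apply, Module.End.one_apply]
      abel
    rw [split]
    exact N.add_mem (h n n.lt_succ_self x) (ih (fun i hi => h i (by omega)) _)

end ComplProd

theorem sum_alternating_smul_mem {R M : Type*} [Ring R] [AddCommGroup M] [Module R M]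
    {N : Submodule R M} {f : ℕ → M} {n j : ℕ} (hj : j + 1 < n) (heq : f j = f (j + 1))
    (h : ∀ i < n, i ≠ j → i ≠ j + 1 → f i ∈ N) :
    ∑ i ∈ Finset.range n, (-1 : R) ^ i • f i ∈ N := by
  have hpair : {j, j + 1} ⊆ Finset.range n := by
    simp only [Finset.insert_subset_iff, Finset.singleton_subset_iff, Finset.mem_range]
    omega
  have cancel : ∑ i ∈ {j, j + 1}, (-1 : R) ^ i • f i = 0 := by
    rw [Finset.sum_pair j.succ_ne_self.symm, ← heq, pow_succ, mul_neg_one, neg_smul,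
      add_neg_cancel]
  rw [← Finset.sum_sdiff hpair, cancel, add_zero]
  refine N.sum_mem fun i hi => N.smul_mem _ ?_
  simp only [Finset.mem_sdiff, Finset.mem_range, Finset.mem_insert, Finset.mem_singleton,
    not_or] at hi
  exact h i hi.1 hi.2.1 hi.2.2

section SkewCubical

variable {R : Type*} [CommRing R] {C : ℕ → Type*}
  [∀ k, AddCommGroup (C k)] [∀ k, Module R (C k)]
  {d dp : (k : ℕ) → ℕ → (C (k + 1) →ₗ[R] C k)}
  {s : (k : ℕ) → ℕ → (C (k + 1) →ₗ[R] C (k + 2))}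

/-- The pre-cubical relation `d_i d'_j = d'_{j-1} d_i` for `i < j` between two families of faces,
with `j` replaced by `j + 1` to avoid subtraction. -/
def FaceFace (d d' : (k : ℕ) → ℕ → (C (k + 1) →ₗ[R] C k)) : Prop :=
  ∀ k i j, 1 ≤ i → i ≤ j → j ≤ k + 1 →
    ∀ x, d k i (d' (k + 1) (j + 1) x) = d' k j (d (k + 1) i x)

/-- The relation `d_i s_j = s_{j-1} d_i` for `i < j`, with `j` replaced by `j + 1` to avoid
subtraction. -/
def FaceDegenLT (d : (k : ℕ) → ℕ → (C (k + 1) →ₗ[R] C k))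
    (s : (k : ℕ) → ℕ → (C (k + 1) →ₗ[R] C (k + 2))) : Prop :=
  ∀ k i j, 1 ≤ i → i ≤ j → j ≤ k + 1 →
    ∀ x, d (k + 2) i (s (k + 1) (j + 1) x) = s k j (d (k + 1) i x)

/-- The relation `d_i s_j = s_j d_{i-1}` for `i > j + 1`, with `i` replaced by `i + 1` to avoid
subtraction. -/
def FaceDegenGT (d : (k : ℕ) → ℕ → (C (k + 1) →ₗ[R] C k))
    (s : (k : ℕ) → ℕ → (C (k + 1) →ₗ[R] C (k + 2))) : Prop :=
  ∀ k i j, 1 ≤ j → j < i → i ≤ k + 2 →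
    ∀ x, d (k + 2) (i + 1) (s (k + 1) j x) = s k j (d (k + 1) i x)

/-- The relation `d_i s_i = d_{i+1} s_i` of a weak skew cubical structure. -/
def FaceDegenEq (d : (k : ℕ) → ℕ → (C (k + 1) →ₗ[R] C k))
    (s : (k : ℕ) → ℕ → (C (k + 1) →ₗ[R] C (k + 2))) : Prop :=
  ∀ k i, 1 ≤ i → i ≤ k + 1 → ∀ x, d (k + 1) i (s k i x) = d (k + 1) (i + 1) (s k i x)

/-- The relation `d_{i+1} s_i = Id` satisfied by the positive faces of a semi-strong structure. -/
def FaceDegenCancel (d : (k : ℕ) → ℕ → (C (k + 1) →ₗ[R] C k))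
    (s : (k : ℕ) → ℕ → (C (k + 1) →ₗ[R] C (k + 2))) : Prop :=
  ∀ k i, 1 ≤ i → i ≤ k + 1 → ∀ x, d (k + 1) (i + 1) (s k i x) = x

/-- The relation `s_i s_j = s_{j+1} s_i` for `i ≤ j` of a semi-strong structure. -/
def DegenDegen (s : (k : ℕ) → ℕ → (C (k + 1) →ₗ[R] C (k + 2))) : Prop :=
  ∀ k i j, 1 ≤ i → i ≤ j → j ≤ k + 1 → ∀ x, s (k + 1) i (s k j x) = s (k + 1) (j + 1) (s k i x)

/-- The endomorphism `s_{i+1} d_{i+2}` of `C_{k+2}`, indexed from `i = 0` as the factors of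
`etaMap` are. -/
def degenFace (d : (k : ℕ) → ℕ → (C (k + 1) →ₗ[R] C k))
    (s : (k : ℕ) → ℕ → (C (k + 1) →ₗ[R] C (k + 2))) (k i : ℕ) : Module.End R (C (k + 2)) :=
  s k (i + 1) ∘ₗ d (k + 1) (i + 2)

theorem degenFace_apply (k i : ℕ) (x : C (k + 2)) :
    degenFace d s k i x = s k (i + 1) (d (k + 1) (i + 2) x) := rfl

theorem etaMap_add_two (k : ℕ) :
    etaMap d s (k + 2) = complProd (degenFace d s k) (k + 1) := by
  rw [complProd, List.prod_eq_foldl, List.foldl_map]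
  rfl

theorem FaceDegenCancel.degenFace_degen (hcancel : FaceDegenCancel d s) {k i : ℕ} (hi : i < k + 1)
    (x : C (k + 1)) : degenFace d s k i (s k (i + 1) x) = s k (i + 1) x := by
  rw [degenFace_apply, hcancel k (i + 1) (by omega) hi]

theorem FaceDegenCancel.face_degenFace (hcancel : FaceDegenCancel d s) {k i : ℕ} (hi : i < k + 1)
    (x : C (k + 2)) : d (k + 1) (i + 2) (degenFace d s k i x) = d (k + 1) (i + 2) x :=
  hcancel k (i + 1) (by omega) hi _

theorem isIdempotentElem_degenFace (hcancel : FaceDegenCancel d s) {k i : ℕ} (hi : i < k + 1) :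
    IsIdempotentElem (degenFace d s k i) :=
  LinearMap.ext fun x => hcancel.degenFace_degen hi (d (k + 1) (i + 2) x)

theorem face_degenFace_comm (hface : FaceFace d d) (hgt : FaceDegenGT d s) {k i j : ℕ}
    (hij : i < j) (hj : j < k + 2) (x : C (k + 3)) :
    d (k + 2) (j + 2) (degenFace d s (k + 1) i x) = degenFace d s k i (d (k + 2) (j + 2) x) := by
  rw [degenFace_apply, degenFace_apply, hgt k (j + 1) (i + 1) (by omega) (by omega) (by omega),
    hface (k + 1) (i + 2) (j + 1) (by omega) (by omega) (by omega)]

theorem degenFace_degen_comm (hgt : FaceDegenGT d s) (hdegen : DegenDegen s) {k i j : ℕ}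
    (hij : i ≤ j) (hj : j < k + 1) (x : C (k + 2)) :
    degenFace d s (k + 1) (j + 1) (s (k + 1) (i + 1) x)
      = s (k + 1) (i + 1) (degenFace d s k j x) := by
  rw [degenFace_apply, degenFace_apply, hgt k (j + 2) (i + 1) (by omega) (by omega) (by omega),
    hdegen k (i + 1) (j + 1) (by omega) (by omega) (by omega)]

theorem degenFace_mul_mul_right (hface : FaceFace d d) (hgt : FaceDegenGT d s)
    (hcancel : FaceDegenCancel d s) {k i j : ℕ} (hij : i < j) (hj : j < k + 1) :
    degenFace d s k j * degenFace d s k i * degenFace d s k j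
      = degenFace d s k j * degenFace d s k i := by
  obtain ⟨k, rfl⟩ : ∃ l, k = l + 1 := ⟨k - 1, by omega⟩
  refine LinearMap.ext fun x => congrArg (s (k + 1) (j + 1)) ?_
  rw [face_degenFace_comm hface hgt hij hj, face_degenFace_comm hface hgt hij hj,
    hcancel.face_degenFace hj]

theorem degenFace_mul_mul_left (hgt : FaceDegenGT d s) (hdegen : DegenDegen s)
    (hcancel : FaceDegenCancel d s) {k i j : ℕ} (hij : i < j) (hj : j < k + 1) :
    degenFace d s k i * degenFace d s k j * degenFace d s k i
      = degenFace d s k j * degenFace d s k i := by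
  obtain ⟨k, rfl⟩ : ∃ l, k = l + 1 := ⟨k - 1, by omega⟩
  obtain ⟨j, rfl⟩ : ∃ l, j = l + 1 := ⟨j - 1, by omega⟩
  refine LinearMap.ext fun x => ?_
  simp only [Module.End.mul_apply]
  rw [degenFace_apply k.succ i x, degenFace_degen_comm hgt hdegen (by omega) (by omega),
    hcancel.degenFace_degen (by omega)]

/-- The intrinsic description `⋂_{j=2}^{k} ker d_j` of the normalized submodule `C_k^N`, which is
defined as the range of `η_k`. -/
def normalizedSub (d : (k : ℕ) → ℕ → (C (k + 1) →ₗ[R] C k)) : (k : ℕ) → Submodule R (C k)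
  | 0 => ⊤
  | k + 1 => ⨅ j ∈ Finset.Icc 2 (k + 1), LinearMap.ker (d k j)

theorem mem_normalizedSub_succ {k : ℕ} {x : C (k + 1)} :
    x ∈ normalizedSub d (k + 1) ↔ ∀ j, 2 ≤ j → j ≤ k + 1 → d k j x = 0 := by
  simp only [normalizedSub, Submodule.mem_iInf, Finset.mem_Icc, LinearMap.mem_ker, and_imp]

theorem isProj_etaMap (hface : FaceFace d d) (hgt : FaceDegenGT d s)
    (hcancel : FaceDegenCancel d s) (k : ℕ) :
    LinearMap.IsProj (normalizedSub d k) (etaMap d s k) := by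
  match k with
  | 0 => exact LinearMap.IsProj.top R (C 0)
  | 1 => simpa [normalizedSub, etaMap] using LinearMap.IsProj.top R (C 1)
  | k + 2 =>
    rw [etaMap_add_two]
    refine ⟨fun x => mem_normalizedSub_succ.mpr fun j hj hjk => ?_, fun x hx => ?_⟩
    · obtain ⟨j, rfl⟩ : ∃ l, j = l + 2 := ⟨j - 2, by omega⟩
      have annihilate : degenFace d s k j * complProd (degenFace d s k) (k + 1) = 0 :=
        mul_complProd_eq_zero (fun i hi => isIdempotentElem_degenFace hcancel hi)
          (fun i j hij hj => degenFace_mul_mul_right hface hgt hcancel hij hj) (by omega)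
      rw [← hcancel.face_degenFace (by omega), ← Module.End.mul_apply, annihilate,
        LinearMap.zero_apply, map_zero]
    · refine complProd_apply_of_forall_apply_eq_zero fun i hi => ?_
      rw [degenFace_apply, mem_normalizedSub_succ.mp hx (i + 2) (by omega) (by omega), map_zero]

theorem degen_mem_degSub {k i : ℕ} (hi : 1 ≤ i) (hik : i ≤ k + 1) (x : C (k + 1)) :
    s k i x ∈ degSub s (k + 2) :=
  Submodule.mem_iSup_of_mem i
    (Submodule.mem_iSup_of_mem (Finset.mem_Icc.mpr ⟨hi, hik⟩) ⟨x, rfl⟩)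

theorem degSub_add_two_le {k : ℕ} {N : Submodule R (C (k + 2))}
    (h : ∀ i, 1 ≤ i → i ≤ k + 1 → ∀ x, s k i x ∈ N) : degSub s (k + 2) ≤ N := by
  refine iSup₂_le fun i hi => ?_
  rintro _ ⟨x, rfl⟩
  exact h i (Finset.mem_Icc.mp hi).1 (Finset.mem_Icc.mp hi).2 x

theorem ker_etaMap (hgt : FaceDegenGT d s) (hdegen : DegenDegen s)
    (hcancel : FaceDegenCancel d s) (k : ℕ) :
    LinearMap.ker (etaMap d s k) = degSub s k := by
  match k with
  | 0 | 1 => exact LinearMap.ker_id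
  | k + 2 =>
    rw [etaMap_add_two]
    refine le_antisymm (fun x hx => ?_) (degSub_add_two_le fun i hi hik x => ?_)
    · have hsub : x - complProd (degenFace d s k) (k + 1) x ∈ degSub s (k + 2) :=
        sub_complProd_apply_mem (fun i hi _ => degen_mem_degSub i.succ_pos hi _) x
      rwa [LinearMap.mem_ker.mp hx, sub_zero] at hsub
    · obtain ⟨i, rfl⟩ : ∃ l, i = l + 1 := ⟨i - 1, by omega⟩
      have annihilate : complProd (degenFace d s k) (k + 1) * degenFace d s k i = 0 :=
        complProd_mul_eq_zero (fun i hi => isIdempotentElem_degenFace hcancel hi)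
          (fun i j hij hj => degenFace_mul_mul_left hgt hdegen hcancel hij hj) (by omega)
      rw [LinearMap.mem_ker, ← hcancel.degenFace_degen (by omega), ← Module.End.mul_apply,
        annihilate, LinearMap.zero_apply]

theorem isCompl_degSub_range_etaMap (hface : FaceFace d d) (hgt : FaceDegenGT d s)
    (hdegen : DegenDegen s) (hcancel : FaceDegenCancel d s) (k : ℕ) :
    IsCompl (degSub s k) (LinearMap.range (etaMap d s k)) := by
  have hproj := isProj_etaMap hface hgt hcancel k
  rw [hproj.range, ← ker_etaMap hgt hdegen hcancel k]
  exact hproj.isCompl.symm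

/-- The alternating sum `∑_{i=1}^{k+1} (-1)^{i-1} d_i : C_{k+1} → C_k` of a family of faces. -/
def altFaceSum (d : (k : ℕ) → ℕ → (C (k + 1) →ₗ[R] C k)) (k : ℕ) : C (k + 1) →ₗ[R] C k :=
  ∑ i ∈ Finset.range (k + 1), (-1 : R) ^ i • d k (i + 1)

theorem altFaceSum_mem_compatibleMaps_degSub (hlt : FaceDegenLT d s) (hgt : FaceDegenGT d s)
    (heq : FaceDegenEq d s) (k : ℕ) :
    altFaceSum d k ∈ Submodule.compatibleMaps (degSub s (k + 1)) (degSub s k) := by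
  match k with
  | 0 => exact bot_le (α := Submodule R (C 1))
  | k + 1 =>
    refine degSub_add_two_le fun j hj hjk x => ?_
    obtain ⟨j, rfl⟩ : ∃ l, j = l + 1 := ⟨j - 1, by omega⟩
    rw [Submodule.mem_comap, altFaceSum, LinearMap.sum_apply]
    refine sum_alternating_smul_mem (f := fun i => d (k + 1) (i + 1) (s k (j + 1) x))
      (by omega) (heq k (j + 1) hj hjk x) fun i hi hne hne' => ?_
    obtain ⟨k, rfl⟩ : ∃ l, k = l + 1 := ⟨k - 1, by omega⟩
    obtain hij | hji : i < j ∨ j + 1 < i := by omega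
    · rw [hlt k (i + 1) j (by omega) hij (by omega)]
      exact degen_mem_degSub (by omega) (by omega) _
    · rw [hgt k i (j + 1) hj hji (by omega)]
      exact degen_mem_degSub hj (by omega) _

theorem face_mem_compatibleMaps_normalizedSub (hleft : FaceFace dp d) (hright : FaceFace d dp)
    {k i : ℕ} (hi : 1 ≤ i) (hik : i ≤ k + 1) :
    d k i ∈ Submodule.compatibleMaps (normalizedSub dp (k + 1)) (normalizedSub dp k) := by
  match k with
  | 0 => exact le_top (α := Submodule R (C 1))
  | k + 1 =>
    refine fun x hx => mem_normalizedSub_succ.mpr fun j hj hjk => ?_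
    rw [mem_normalizedSub_succ] at hx
    obtain hij | hji := le_or_gt i j
    · rw [← hright k i j hi hij hjk, hx (j + 1) (by omega) (by omega), map_zero]
    · obtain ⟨i, rfl⟩ : ∃ l, i = l + 1 := ⟨i - 1, by omega⟩
      rw [hleft k j i (by omega) (by omega) (by omega), hx j hj (by omega), map_zero]

theorem altFaceSum_mem_compatibleMaps_normalizedSub (hleft : FaceFace dp d)
    (hright : FaceFace d dp) (k : ℕ) :
    altFaceSum d k ∈ Submodule.compatibleMaps (normalizedSub dp (k + 1)) (normalizedSub dp k) :=
  Submodule.sum_mem _ fun _ hi => Submodule.smul_mem _ _ <|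
    face_mem_compatibleMaps_normalizedSub hleft hright (Nat.succ_pos _) (Finset.mem_range.mp hi)

end SkewCubical

/-- For a semi-strong skew cubical structure in `R`-modules, with
`C_k^D = ∑_{i=1}^{k-1} Im s_i` and `C_k^N = Im η_k`, one has the internal direct
sum decomposition `C_k = C_k^D ⊕ C_k^N`, and for all `α, β ∈ R` the differential
`∂_k^{(α,β)}` maps `C_k^D` into `C_{k-1}^D` and `C_k^N` into `C_{k-1}^N`. -/
theorem statement_2 {R : Type*} [CommRing R] (C : ℕ → Type*)
    [∀ k, AddCommGroup (C k)] [∀ k, Module R (C k)]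
    (dp dm : (k : ℕ) → ℕ → (C (k + 1) →ₗ[R] C k))
    (s : (k : ℕ) → ℕ → (C (k + 1) →ₗ[R] C (k + 2)))
    (hpre : ∀ (ε ζ : Bool) (k i j : ℕ), 1 ≤ i → i < j → j ≤ k + 2 →
      ((cond ε dp dm) k i).comp ((cond ζ dp dm) (k + 1) j)
        = ((cond ζ dp dm) k (j - 1)).comp ((cond ε dp dm) (k + 1) i))
    (hds1 : ∀ (ε : Bool) (k i j : ℕ), 1 ≤ i → i < j → j ≤ k + 2 →
      ((cond ε dp dm) (k + 2) i).comp (s (k + 1) j)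
        = (s k (j - 1)).comp ((cond ε dp dm) (k + 1) i))
    (hds2 : ∀ (ε : Bool) (k i j : ℕ), 1 ≤ j → j + 1 < i → i ≤ k + 3 →
      ((cond ε dp dm) (k + 2) i).comp (s (k + 1) j)
        = (s k j).comp ((cond ε dp dm) (k + 1) (i - 1)))
    (hds3 : ∀ (ε : Bool) (k i : ℕ), 1 ≤ i → i ≤ k + 1 →
      ((cond ε dp dm) (k + 1) i).comp (s k i)
        = ((cond ε dp dm) (k + 1) (i + 1)).comp (s k i))
    (hss : ∀ (k i j : ℕ), 1 ≤ i → i ≤ j → j ≤ k + 1 →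
      (s (k + 1) i).comp (s k j) = (s (k + 1) (j + 1)).comp (s k i))
    (hid : ∀ (k i : ℕ), 1 ≤ i → i ≤ k + 1 →
      (dp (k + 1) i).comp (s k i) = LinearMap.id ∧
      (dp (k + 1) (i + 1)).comp (s k i) = LinearMap.id)
    (D : R → R → (k : ℕ) → C (k + 1) →ₗ[R] C k)
    (hD : ∀ α β k, D α β k
        = α • (∑ i ∈ Finset.range (k + 1), ((-1 : R) ^ i) • dp k (i + 1))
        + β • (∑ i ∈ Finset.range (k + 1), ((-1 : R) ^ i) • dm k (i + 1))) :
    (∀ k, degSub s k ⊔ LinearMap.range (etaMap dp s k) = ⊤ ∧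
          degSub s k ⊓ LinearMap.range (etaMap dp s k) = ⊥) ∧
    (∀ (α β : R) (k : ℕ),
        Submodule.map (D α β k) (degSub s (k + 1)) ≤ degSub s k ∧
        Submodule.map (D α β k) (LinearMap.range (etaMap dp s (k + 1)))
          ≤ LinearMap.range (etaMap dp s k)) := by
  have hface (ε ζ : Bool) : FaceFace (cond ε dp dm) (cond ζ dp dm) := fun k i j hi hij hj =>
    LinearMap.congr_fun (hpre ε ζ k i (j + 1) hi (by omega) (by omega))
  have hlt (ε : Bool) : FaceDegenLT (cond ε dp dm) s := fun k i j hi hij hj =>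
    LinearMap.congr_fun (hds1 ε k i (j + 1) hi (by omega) (by omega))
  have hgt (ε : Bool) : FaceDegenGT (cond ε dp dm) s := fun k i j hj hij hi =>
    LinearMap.congr_fun (hds2 ε k (i + 1) j hj (by omega) (by omega))
  have heq (ε : Bool) : FaceDegenEq (cond ε dp dm) s := fun k i hi hik =>
    LinearMap.congr_fun (hds3 ε k i hi hik)
  have hdegen : DegenDegen s := fun k i j hi hij hj => LinearMap.congr_fun (hss k i j hi hij hj)
  have hcancel : FaceDegenCancel dp s := fun k i hi hik => LinearMap.congr_fun (hid k i hi hik).2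
  refine ⟨fun k => ?_, fun α β k => ?_⟩
  · have hcompl := isCompl_degSub_range_etaMap (hface true true) (hgt true) hdegen hcancel k
    exact ⟨hcompl.sup_eq_top, hcompl.inf_eq_bot⟩
  · have hrange (k : ℕ) : LinearMap.range (etaMap dp s k) = normalizedSub dp k :=
      (isProj_etaMap (hface true true) (hgt true) hcancel k).range
    have hdeg (ε : Bool) := altFaceSum_mem_compatibleMaps_degSub (hlt ε) (hgt ε) (heq ε) k
    have hnorm (ε : Bool) :=
      altFaceSum_mem_compatibleMaps_normalizedSub (hface true ε) (hface ε true) k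
    rw [hD, hrange, hrange, Submodule.map_le_iff_le_comap, Submodule.map_le_iff_le_comap]
    exact ⟨add_mem (Submodule.smul_mem _ α (hdeg true)) (Submodule.smul_mem _ β (hdeg false)),
      add_mem (Submodule.smul_mem _ α (hnorm true)) (Submodule.smul_mem _ β (hnorm false))⟩
end

section
/- Let (X, σ) be a braided set, M a right module and N a left module over (X, σ). On C_n := M × Xⁿ × N define, for 1 ≤ i ≤ n, the maps d_i^{l,+} := ρ_0 ∘ σ_1 ∘ ⋯ ∘ σ_{i−1} and d_i^{r,−} := λ_n ∘ σ_{n−1} ∘ ⋯ ∘ σ_i from C_n to C_{n−1} (σ_{i−1} applied first, and σ_i applied first, respectively; d_1^{l,+} = ρ_0 and d_n^{r,−} = λ_n). Then: (1) these maps satisfy the pre-cubical relations d_i^ε ∘ d_j^ζ = d_{j−1}^ζ ∘ d_i^ε for all 1 ≤ i < j ≤ n and all ε, ζ ∈ {(l,+), (r,−)}; (2) if moreover σ is bijective and one also defines d_i^{l,−} := ρ_0 ∘ σ_1^{−1} ∘ ⋯ ∘ σ_{i−1}^{−1} and d_i^{r,+} := λ_n ∘ σ_{n−1}^{−1} ∘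 ⋯ ∘ σ_i^{−1}, then for every choice ε, ζ ∈ {l, r} the pair of families (d_i^{ε,+}, d_i^{ζ,−}) satisfies the same pre-cubical relations. -/
/-- `σ` applied at positions 1,2 of `X × X × X`. -/
def s12 {X : Type*} (σ : X × X → X × X) : X × X × X → X × X × X :=
  fun p => ((σ (p.1, p.2.1)).1, (σ (p.1, p.2.1)).2, p.2.2)

/-- `σ` applied at positions 2,3 of `X × X × X`. -/
def s23 {X : Type*} (σ : X × X → X × X) : X × X × X → X × X × X :=
  fun p => (p.1, σ p.2)

/-- Apply `σ` at (1-based) positions `i, i+1` of a list. -/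
def applyAt {X : Type*} (σ : X × X → X × X) : ℕ → List X → List X
  | 1, a :: b :: t => (σ (a, b)).1 :: (σ (a, b)).2 :: t
  | n + 2, a :: t => a :: applyAt σ (n + 1) t
  | _, l => l

/-- `σ_1 ∘ σ_2 ∘ ⋯ ∘ σ_j` (with `σ_j` applied first). -/
def chainLow {X : Type*} (σ : X × X → X × X) : ℕ → List X → List X
  | 0, l => l
  | j + 1, l => chainLow σ j (applyAt σ (j + 1) l)

/-- `σ_{i+c-1} ∘ ⋯ ∘ σ_{i+1} ∘ σ_i` (with `σ_i` applied first). -/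
def chainHigh {X : Type*} (σ : X × X → X × X) : ℕ → ℕ → List X → List X
  | _, 0, l => l
  | i, c + 1, l => chainHigh σ (i + 1) c (applyAt σ i l)

/-- `ρ_0`: act with the first `X`-entry on the `M`-component. -/
def rho0 {X M N : Type*} (actM : M → X → M) :
    M × List X × N → M × List X × N
  | (m, x :: t, ν) => (actM m x, t, ν)
  | p => p

/-- `λ_n`: act with the last `X`-entry on the `N`-component. -/
def lamN {X M N : Type*} (actN : X → N → N) :
    M × List X × N → M × List X × N :=
  fun p =>
    match p.2.1.getLast? with
    | some a => (p.1, p.2.1.dropLast, actN a p.2.2)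
    | none => p

/-- The braided boundary `d_i^{l,+} = ρ_0 ∘ σ_1 ∘ ⋯ ∘ σ_{i-1}`. -/
def dLP {X M N : Type*} (σ : X × X → X × X) (actM : M → X → M) (i : ℕ) :
    M × List X × N → M × List X × N :=
  fun p => rho0 actM (p.1, chainLow σ (i - 1) p.2.1, p.2.2)

/-- The braided boundary `d_i^{r,-} = λ_n ∘ σ_{n-1} ∘ ⋯ ∘ σ_i`. -/
def dRM {X M N : Type*} (σ : X × X → X × X) (actN : X → N → N) (n i : ℕ) :
    M × List X × N → M × List X × N :=
  fun p => lamN actN (p.1, chainHigh σ i (n - i) p.2.1, p.2.2)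

/-!
Draw `M × Xⁿ × N` as `n` parallel strands, adjacent ones crossing by `σ` or `σ⁻¹`. Then
`d_i^{l,±}` pulls the `i`-th strand to the left across its predecessors and absorbs it in `M`, and
`d_i^{r,±}` pulls it to the right and absorbs it in `N`. For `i < j`, the two composites of the
relation `d_i d_j = d_{j-1} d_i` remove the same two strands and cross every pair of strands by
the same map, so they differ by Yang–Baxter moves, plus one application of a module axiom when
both strands leave on the same side. All these moves involve the `i`-th strand, the `j`-th strand
and one block of other strands, lying left of, between or right of them; so a single Yang–Baxter
equation, with a block as its first, second or third strand, settles each case. When both `σ` and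
`σ⁻¹` occur, different pairs of strands cross by different maps, which is why the equation is
stated with three crossing maps.
-/

section ColoredYangBaxter

variable {A B C A' B' : Type*}

/-- The map `f × id` on triples, the analogue of `s12` for strands carrying different colours. -/
def crossLeft (f : A × B → A' × B') : A × B × C → A' × B' × C :=
  fun p => ((f (p.1, p.2.1)).1, (f (p.1, p.2.1)).2, p.2.2)

/-- The map `id × f` on triples, the analogue of `s23` for strands carrying different colours. -/
def crossRight (f : B × C → A' × B') : A × B × C → A × A' × B' :=
  fun p => (p.1, f p.2)

/-- The Yang–Baxter equation for three strands with colours `A`, `B`, `C`, where each pair of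
colours crosses by its own map. -/
def ColoredYangBaxter (α : B × C → C × B) (β : A × C → C × A) (γ : A × B → B × A) : Prop :=
  crossLeft α ∘ crossRight β ∘ crossLeft γ = crossRight γ ∘ crossLeft β ∘ crossRight α

theorem coloredYangBaxter_iff {α : B × C → C × B} {β : A × C → C × A} {γ : A × B → B × A} :
    ColoredYangBaxter α β γ ↔ ∀ a b c,
      (α ((γ (a, b)).1, (β ((γ (a, b)).2, c)).1)).1 = (β (a, (α (b, c)).1)).1 ∧
      (α ((γ (a, b)).1, (β ((γ (a, b)).2, c)).1)).2 =
        (γ ((β (a, (α (b, c)).1)).2, (α (b, c)).2)).1 ∧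
      (β ((γ (a, b)).2, c)).2 = (γ ((β (a, (α (b, c)).1)).2, (α (b, c)).2)).2 := by
  simp only [ColoredYangBaxter, crossLeft, crossRight, funext_iff, Prod.forall,
    Function.comp_apply, Prod.ext_iff]

theorem ColoredYangBaxter.symm {α : B × C ≃ C × B} {β : A × C ≃ C × A} {γ : A × B ≃ B × A}
    (h : ColoredYangBaxter α β γ) : ColoredYangBaxter γ.symm β.symm α.symm := by
  have leftInverse : Function.LeftInverse
      (crossLeft γ.symm ∘ crossRight β.symm ∘ crossLeft α.symm)
      (crossLeft α ∘ crossRight β ∘ crossLeft γ) :=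
    fun p => by simp [crossLeft, crossRight]
  have rightInverse : Function.RightInverse
      (crossRight α.symm ∘ crossLeft β.symm ∘ crossRight γ.symm)
      (crossRight γ ∘ crossLeft β ∘ crossRight α) :=
    fun p => by simp [crossLeft, crossRight]
  exact leftInverse.eq_rightInverse (h ▸ rightInverse)

theorem ColoredYangBaxter.rotate {α : B × C → C × B} {β : A × C → C × A} {γ : A × B ≃ B × A}
    (h : ColoredYangBaxter α β γ) : ColoredYangBaxter β α γ.symm := by
  funext p
  have braid := congrArg (crossRight γ.symm) (congrFun h (crossLeft γ.symm p))
  simpa [crossLeft, crossRight] using braid.symm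

end ColoredYangBaxter

section Slide

variable {A B C : Type*}

/-- Carries a `B`-strand leftwards across a cable of `A`-strands, crossing each of them by `f`. -/
def slideLeft (f : A × B → B × A) : List A × B → B × List A
  | ([], b) => (b, [])
  | (a :: u, b) =>
    let (b₁, u₁) := slideLeft f (u, b)
    let (b₂, a₁) := f (a, b₁)
    (b₂, a₁ :: u₁)

/-- Carries an `A`-strand rightwards across a cable of `B`-strands, crossing each of them by `f`. -/
def slideRight (f : A × B → B × A) : A × List B → List B × A
  | (a, []) => ([], a)
  | (a, b :: v) =>
    let (b₁, a₁) := f (a, b)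
    let (v₁, a₂) := slideRight f (a₁, v)
    (b₁ :: v₁, a₂)

@[simp, grind =]
theorem length_slideLeft (f : A × B → B × A) (u : List A) (b : B) :
    (slideLeft f (u, b)).2.length = u.length := by
  induction u with
  | nil => simp [slideLeft]
  | cons a u ih => simp [slideLeft, ih]

@[simp, grind =]
theorem length_slideRight (f : A × B → B × A) (a : A) (v : List B) :
    (slideRight f (a, v)).1.length = v.length := by
  induction v generalizing a with
  | nil => simp [slideRight]
  | cons b v ih => simp [slideRight, ih]

theorem slideLeft_append (f : A × B → B × A) (u v : List A) (b : B) :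
    slideLeft f (u ++ v, b) =
      ((slideLeft f (u, (slideLeft f (v, b)).1)).1,
        (slideLeft f (u, (slideLeft f (v, b)).1)).2 ++ (slideLeft f (v, b)).2) := by
  induction u with
  | nil => simp [slideLeft]
  | cons a u ih => simp [slideLeft, ih]

theorem slideRight_append (f : A × B → B × A) (a : A) (v w : List B) :
    slideRight f (a, v ++ w) =
      ((slideRight f (a, v)).1 ++ (slideRight f ((slideRight f (a, v)).2, w)).1,
        (slideRight f ((slideRight f (a, v)).2, w)).2) := by
  induction v generalizing a with
  | nil => simp [slideRight]
  | cons b v ih => simp [slideRight, ih]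

variable {α : B × C → C × B} {β : A × C → C × A} {γ : A × B → B × A}

theorem ColoredYangBaxter.cable_left (h : ColoredYangBaxter α β γ) :
    ColoredYangBaxter α (slideLeft β) (slideLeft γ) := by
  rw [coloredYangBaxter_iff] at h ⊢
  intro u b c
  induction u with
  | nil => simp [slideLeft]
  | cons a u ih =>
    have braid := h a (slideLeft γ (u, b)).1 (slideLeft β ((slideLeft γ (u, b)).2, c)).1
    simp only [slideLeft, ih, braid, and_self]

theorem ColoredYangBaxter.cable_middle (h : ColoredYangBaxter α β γ) :
    ColoredYangBaxter (slideLeft α) β (slideRight γ) := by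
  rw [coloredYangBaxter_iff] at h ⊢
  intro a v c
  induction v generalizing a with
  | nil => simp [slideLeft, slideRight]
  | cons b v ih =>
    have braid := h a b (slideLeft α (v, c)).1
    simp only [slideLeft, slideRight, ih, braid, and_self]

theorem ColoredYangBaxter.cable_right (h : ColoredYangBaxter α β γ) :
    ColoredYangBaxter (slideRight α) (slideRight β) γ := by
  rw [coloredYangBaxter_iff] at h ⊢
  intro a b w
  induction w generalizing a b with
  | nil => simp [slideRight]
  | cons c w ih =>
    have braid := h a b c
    simp only [slideRight, ih, braid, and_self]

end Slide

section BraidedModule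

variable {X M N : Type*}

/-- `M` is a right module over `(X, σ)` under the action `act`. -/
def IsRightBraidedModule (σ : X × X → X × X) (act : M → X → M) : Prop :=
  ∀ m a b, act (act m a) b = act (act m (σ (a, b)).1) (σ (a, b)).2

/-- `N` is a left module over `(X, σ)` under the action `act`. -/
def IsLeftBraidedModule (σ : X × X → X × X) (act : X → N → N) : Prop :=
  ∀ a b ν, act a (act b ν) = act (σ (a, b)).1 (act (σ (a, b)).2 ν)

theorem IsRightBraidedModule.symm {σ : X × X ≃ X × X} {act : M → X → M}
    (h : IsRightBraidedModule σ act) : IsRightBraidedModule σ.symm act := fun m a b => by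
  simpa using (h m (σ.symm (a, b)).1 (σ.symm (a, b)).2).symm

theorem IsLeftBraidedModule.symm {σ : X × X ≃ X × X} {act : X → N → N}
    (h : IsLeftBraidedModule σ act) : IsLeftBraidedModule σ.symm act := fun a b ν => by
  simpa using (h (σ.symm (a, b)).1 (σ.symm (a, b)).2 ν).symm

end BraidedModule

section Boundary

variable {X M N : Type*} (σ : X × X → X × X)

theorem applyAt_append (u : List X) (a b : X) (v : List X) :
    applyAt σ (u.length + 1) (u ++ a :: b :: v) = u ++ (σ (a, b)).1 :: (σ (a, b)).2 :: v := by
  induction u with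
  | nil => rfl
  | cons x u ih => simpa [applyAt] using ih

theorem chainLow_succ_cons (k : ℕ) (x : X) (l : List X) :
    chainLow σ (k + 1) (x :: l) = applyAt σ 1 (x :: chainLow σ k l) := by
  induction k generalizing l with
  | zero => rfl
  | succ k ih => exact ih (applyAt σ (k + 1) l)

theorem chainLow_append_cons (u : List X) (a : X) (v : List X) :
    chainLow σ u.length (u ++ a :: v) =
      (slideLeft σ (u, a)).1 :: ((slideLeft σ (u, a)).2 ++ v) := by
  induction u with
  | nil => simp [chainLow, slideLeft]
  | cons x u ih =>
    simp only [List.length_cons, List.cons_append, chainLow_succ_cons, ih, applyAt, slideLeft]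

theorem chainHigh_append_cons (u : List X) (a : X) (v : List X) :
    chainHigh σ (u.length + 1) v.length (u ++ a :: v) =
      u ++ (slideRight σ (a, v)).1 ++ [(slideRight σ (a, v)).2] := by
  induction v generalizing u a with
  | nil => simp [chainHigh, slideRight]
  | cons b v ih =>
    simpa [chainHigh, applyAt_append, slideRight] using ih (u ++ [(σ (a, b)).1]) (σ (a, b)).2

theorem dLP_append_cons {actM : M → X → M} {i : ℕ} {m : M} (u : List X) {a : X} {v : List X}
    {ν : N} (hi : i = u.length + 1) :
    dLP σ actM i (m, u ++ a :: v, ν) =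
      (actM m (slideLeft σ (u, a)).1, (slideLeft σ (u, a)).2 ++ v, ν) := by
  simp only [dLP, hi, Nat.add_sub_cancel, chainLow_append_cons, rho0]

theorem dRM_append_cons {actN : X → N → N} {n i : ℕ} {m : M} (u : List X) {a : X} {v : List X}
    {ν : N} (hi : i = u.length + 1) (hn : n = i + v.length) :
    dRM σ actN n i (m, u ++ a :: v, ν) =
      (m, u ++ (slideRight σ (a, v)).1, actN (slideRight σ (a, v)).2 ν) := by
  simp only [dRM, hn, hi, Nat.add_sub_cancel_left, chainHigh_append_cons, lamN,
    List.getLast?_concat, List.dropLast_concat]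

end Boundary

section Precubical

variable {X M N : Type*}

/-- The relations `D_i ∘ D'_j = D'_{j-1} ∘ D_i` for `1 ≤ i < j ≤ n`. The set `M × Xⁿ × N` consists
of the triples in `M × List X × N` whose list has length `n`, and `D n i` is the `i`-th map
defined on it. -/
def PrecubicalRelation (D D' : ℕ → ℕ → M × List X × N → M × List X × N) : Prop :=
  ∀ (n i j : ℕ) (p : M × List X × N), p.2.1.length = n → 1 ≤ i → i < j → j ≤ n →
    D (n - 1) i (D' n j p) = D' (n - 1) (j - 1) (D n i p)

theorem exists_eq_append_cons_of_lt_length {k : ℕ} {l : List X} (hk : k < l.length) :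
    ∃ u a v, l = u ++ a :: v ∧ u.length = k :=
  ⟨l.take k, l[k], l.drop (k + 1), by simp, by simpa using hk.le⟩

-- Each side brackets the list around the letter that its inner map removes.
theorem PrecubicalRelation.of_append {D D' : ℕ → ℕ → M × List X × N → M × List X × N}
    (h : ∀ m u a v b w ν n, n = u.length + v.length + w.length + 1 →
      D n (u.length + 1) (D' (n + 1) (u.length + v.length + 2) (m, u ++ a :: v ++ b :: w, ν)) =
        D' n (u.length + v.length + 1) (D (n + 1) (u.length + 1) (m, u ++ a :: (v ++ b :: w), ν))) :
    PrecubicalRelation D D' := by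
  rintro n i j ⟨m, l, ν⟩ rfl hi hij (hj : j ≤ l.length)
  obtain ⟨u, a, t, rfl, hu⟩ := exists_eq_append_cons_of_lt_length (k := i - 1) (l := l) (by omega)
  obtain ⟨v, b, w, rfl, hv⟩ := exists_eq_append_cons_of_lt_length (k := j - i - 1) (l := t)
    (by grind)
  obtain rfl : i = u.length + 1 := by omega
  obtain rfl : j = u.length + v.length + 2 := by omega
  have hn : (u ++ a :: (v ++ b :: w)).length = u.length + v.length + w.length + 1 + 1 := by grind
  simpa [hn] using h m u a v b w ν _ rfl

variable {σ τ : X × X → X × X} {actM : M → X → M} {actN : X → N → N}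

theorem precubicalRelation_dLP_dLP (h : ColoredYangBaxter τ τ σ)
    (hM : IsRightBraidedModule τ actM) :
    PrecubicalRelation (N := N) (fun _ => dLP σ actM) (fun _ => dLP τ actM) := by
  refine .of_append fun m u a v b w ν n _ => ?_
  -- Both composites carry `b` across `v` first, and then differ only in how `u`, `a`, `b` cross.
  have braid := coloredYangBaxter_iff.1 h.cable_left u a (slideLeft τ (v, b)).1
  rw [dLP_append_cons τ (u ++ a :: v) (by grind), dLP_append_cons σ u rfl,
    ← List.append_assoc, dLP_append_cons τ _ (by simp)]
  simp only [slideLeft_append, slideLeft, List.append_assoc, List.cons_append]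
  rw [dLP_append_cons σ _ (by simp), hM _ (slideLeft σ (u, a)).1]
  simp only [braid]

theorem precubicalRelation_dLP_dRM :
    PrecubicalRelation (fun _ => dLP σ actM) (dRM τ actN) := by
  refine .of_append fun m u a v b w ν n hn => ?_
  rw [dRM_append_cons τ (u ++ a :: v) (by grind) (by omega),
    dLP_append_cons σ u rfl, List.append_assoc, List.cons_append,
    dLP_append_cons σ _ rfl, ← List.append_assoc _ v (b :: w),
    dRM_append_cons τ _ (by simp) (by omega), List.append_assoc]

theorem precubicalRelation_dRM_dLP (h : ColoredYangBaxter σ σ σ) :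
    PrecubicalRelation (dRM σ actN) (fun _ => dLP σ actM) := by
  refine .of_append fun m u a v b w ν n hn => ?_
  have braid := coloredYangBaxter_iff.1 h.cable_middle a v b
  rw [dLP_append_cons σ (u ++ a :: v) (by grind),
    dRM_append_cons σ u rfl (by grind)]
  simp only [slideLeft_append, slideRight_append, slideLeft, slideRight, List.append_assoc,
    List.cons_append]
  rw [dRM_append_cons σ _ (by simp) (by grind),
    ← List.append_assoc, dLP_append_cons σ _ (by simp)]
  simp only [slideLeft_append, slideRight_append, braid, List.append_assoc]

theorem precubicalRelation_dRM_dRM (h : ColoredYangBaxter σ τ τ)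
    (hN : IsLeftBraidedModule τ actN) :
    PrecubicalRelation (M := M) (dRM τ actN) (dRM σ actN) := by
  refine .of_append fun m u a v b w ν n hn => ?_
  -- Both composites carry `a` across `v` first, and then differ only in how `a`, `b`, `w` cross.
  have braid := coloredYangBaxter_iff.1 h.cable_right (slideRight τ (a, v)).2 b w
  rw [dRM_append_cons σ (u ++ a :: v) (by grind) (by omega),
    dRM_append_cons τ u rfl (by grind), List.append_assoc, List.cons_append,
    dRM_append_cons τ _ rfl (by grind)]
  simp only [slideRight_append, slideRight]
  rw [← List.append_assoc u _ (_ :: _), dRM_append_cons σ _ (by simp) (by grind),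
    hN (slideRight τ _).2]
  simp only [braid, List.append_assoc]

/-- The pre-cubical relations for a pair of families, indexed as in `PrecubicalRelation`. -/
def IsPrecubicalPair (D D' : ℕ → ℕ → M × List X × N → M × List X × N) : Prop :=
  ∀ (n i j : ℕ) (p : M × List X × N), p.2.1.length = n → 1 ≤ i → i < j → j ≤ n →
    D (n - 1) i (D n j p) = D (n - 1) (j - 1) (D n i p) ∧
    D (n - 1) i (D' n j p) = D' (n - 1) (j - 1) (D n i p) ∧
    D' (n - 1) i (D n j p) = D (n - 1) (j - 1) (D' n i p) ∧
    D' (n - 1) i (D' n j p) = D' (n - 1) (j - 1) (D' n i p)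

theorem isPrecubicalPair_iff {D D' : ℕ → ℕ → M × List X × N → M × List X × N} :
    IsPrecubicalPair D D' ↔ PrecubicalRelation D D ∧ PrecubicalRelation D D' ∧
      PrecubicalRelation D' D ∧ PrecubicalRelation D' D' := by
  simp only [IsPrecubicalPair, PrecubicalRelation, ← forall_and]

theorem IsPrecubicalPair.symm {D D' : ℕ → ℕ → M × List X × N → M × List X × N}
    (h : IsPrecubicalPair D D') : IsPrecubicalPair D' D := by
  obtain ⟨h₁, h₂, h₃, h₄⟩ := isPrecubicalPair_iff.1 h
  exact isPrecubicalPair_iff.2 ⟨h₄, h₃, h₂, h₁⟩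

theorem isPrecubicalPair_dLP_dRM (h : ColoredYangBaxter σ σ σ)
    (hM : IsRightBraidedModule σ actM) (hN : IsLeftBraidedModule σ actN) :
    IsPrecubicalPair (fun _ => dLP σ actM) (dRM σ actN) :=
  isPrecubicalPair_iff.2 ⟨precubicalRelation_dLP_dLP h hM, precubicalRelation_dLP_dRM,
    precubicalRelation_dRM_dLP h, precubicalRelation_dRM_dRM h hN⟩

theorem isPrecubicalPair_dLP_dLP_symm {e : X × X ≃ X × X} (h : ColoredYangBaxter e e e)
    (hM : IsRightBraidedModule e actM) :
    IsPrecubicalPair (N := N) (fun _ => dLP e actM) (fun _ => dLP e.symm actM) :=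
  isPrecubicalPair_iff.2 ⟨precubicalRelation_dLP_dLP h hM,
    precubicalRelation_dLP_dLP h.symm.rotate hM.symm,
    precubicalRelation_dLP_dLP h.rotate hM,
    precubicalRelation_dLP_dLP h.symm hM.symm⟩

theorem isPrecubicalPair_dRM_symm_dRM {e : X × X ≃ X × X} (h : ColoredYangBaxter e e e)
    (hN : IsLeftBraidedModule e actN) :
    IsPrecubicalPair (M := M) (dRM e.symm actN) (dRM e actN) :=
  isPrecubicalPair_iff.2 ⟨precubicalRelation_dRM_dRM h.symm hN.symm,
    precubicalRelation_dRM_dRM h.rotate.symm hN.symm,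
    precubicalRelation_dRM_dRM h.symm.rotate.symm hN,
    precubicalRelation_dRM_dRM h hN⟩

end Precubical

/-- For a braided set `(X, σ)`, a right module `M` and a left
module `N`, the families `(d_i^{l,+}, d_i^{r,-})` on `M × Xⁿ × N` satisfy the
pre-cubical relations; and if `σ` is bijective, so do `(d_i^{ε,+}, d_i^{ζ,−})`
for every choice `ε, ζ ∈ {l, r}`, where `d_i^{l,−}, d_i^{r,+}` are defined
using `σ⁻¹`. -/
theorem statement_4 {X M N : Type*} (σ : X × X → X × X)
    (hYB : s12 σ ∘ s23 σ ∘ s12 σ = s23 σ ∘ s12 σ ∘ s23 σ)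
    (actM : M → X → M)
    (hM : ∀ (m : M) (a b : X),
      actM (actM m a) b = actM (actM m (σ (a, b)).1) (σ (a, b)).2)
    (actN : X → N → N)
    (hN : ∀ (a b : X) (n : N),
      actN a (actN b n) = actN (σ (a, b)).1 (actN (σ (a, b)).2 n)) :
    (∀ (n i j : ℕ) (p : M × List X × N), p.2.1.length = n →
      1 ≤ i → i < j → j ≤ n →
      dLP σ actM i (dLP σ actM j p) = dLP σ actM (j - 1) (dLP σ actM i p) ∧
      dLP σ actM i (dRM σ actN n j p)
        = dRM σ actN (n - 1) (j - 1) (dLP σ actM i p) ∧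
      dRM σ actN (n - 1) i (dLP σ actM j p)
        = dLP σ actM (j - 1) (dRM σ actN n i p) ∧
      dRM σ actN (n - 1) i (dRM σ actN n j p)
        = dRM σ actN (n - 1) (j - 1) (dRM σ actN n i p)) ∧
    (Function.Bijective σ →
      ∀ σinv : X × X → X × X,
        (∀ q, σ (σinv q) = q) → (∀ q, σinv (σ q) = q) →
        ∀ (ε ζ : Bool)
          (Dp Dm : ℕ → ℕ → (M × List X × N → M × List X × N)),
          (∀ n i, Dp n i = if ε then dLP σ actM i else dRM σinv actN n i) →
          (∀ n i, Dm n i = if ζ then dLP σinv actM i else dRM σ actN n i) →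
          ∀ (n i j : ℕ) (p : M × List X × N), p.2.1.length = n →
            1 ≤ i → i < j → j ≤ n →
            Dp (n - 1) i (Dp n j p) = Dp (n - 1) (j - 1) (Dp n i p) ∧
            Dp (n - 1) i (Dm n j p) = Dm (n - 1) (j - 1) (Dp n i p) ∧
            Dm (n - 1) i (Dp n j p) = Dp (n - 1) (j - 1) (Dm n i p) ∧
            Dm (n - 1) i (Dm n j p) = Dm (n - 1) (j - 1) (Dm n i p)) := by
  refine ⟨isPrecubicalPair_dLP_dRM hYB hM hN, fun _ σinv hright hleft ε ζ Dp Dm hDp hDm => ?_⟩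
  obtain ⟨e, rfl, rfl⟩ : ∃ e : X × X ≃ X × X, e = σ ∧ e.symm = σinv :=
    ⟨⟨σ, σinv, hleft, hright⟩, rfl, rfl⟩
  have hYB : ColoredYangBaxter e e e := hYB
  have hM : IsRightBraidedModule e actM := hM
  have hN : IsLeftBraidedModule e actN := hN
  obtain rfl := funext₂ hDp
  obtain rfl := funext₂ hDm
  match ε, ζ with
  | true, true => exact isPrecubicalPair_dLP_dLP_symm hYB hM
  | true, false => exact isPrecubicalPair_dLP_dRM hYB hM hN
  | false, true => exact (isPrecubicalPair_dLP_dRM hYB.symm hM.symm hN.symm).symm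
  | false, false => exact isPrecubicalPair_dRM_symm_dRM hYB hN
end

section
/- Let (X, σ) be a birack. For n ≥ 1 and 1 ≤ i ≤ n define maps Xⁿ → X^{n−1}: d_i(x₁,…,x_n) := (x_i⊛x₁, …, x_i⊛x_{i−1}, x_i·x_{i+1}, …, x_i·x_n); d'_i(x₁,…,x_n) := (x₁,…,x_{i−1}, x_{i+1},…,x_n); and d_i^⋆(x₁,…,x_n) := (x_i·x₁, …, x_i·x_{i−1}, x_i⊛x_{i+1}, …, x_i⊛x_n). Then the pair of families (d'_i, d_i) forms a pre-cubical structure in Set, i.e., d_i^ε ∘ d_j^ζ = d_{j−1}^ζ ∘ d_i^ε for all 1 ≤ i < j ≤ n, where each of d^ε, d^ζ may independently be taken from {d, d'}; and the same holds with the family d_i replaced throughout by d_i^⋆. -/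
/-- The birack boundary
`d_i(x₁,…,x_n) = (x_i⊛x₁,…,x_i⊛x_{i-1}, x_i·x_{i+1},…,x_i·x_n)`, with
`star x_i x_j = x_i ⊛ x_j` applied to the prefix and `dot x_i x_j = x_i · x_j`
to the suffix (1-based index `i`). -/
def dBr {X : Type*} (star dot : X → X → X) (i : ℕ) (xs : List X) : List X :=
  match xs[i - 1]? with
  | some x => ((xs.take (i - 1)).map (fun a => star x a))
      ++ ((xs.drop i).map (fun a => dot x a))
  | none => xs

/-- The boundary `d'_i(x₁,…,x_n) = (x₁,…,x_{i-1},x_{i+1},…,x_n)`. -/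
def dErase {X : Type*} (i : ℕ) (xs : List X) : List X := xs.eraseIdx (i - 1)

/-!
Reading `σ` sideways turns the braiding into a pair of operations: `σ (u, v) = (c, a)` says exactly
that `u = v ⊛ a` and `c = a · v`. Expanding the Yang–Baxter equation at the triple
`((y ⊛ x) ⊛ (y ⊛ w), y ⊛ x, y)` in these terms yields three exchange laws between `⊛` and `·`, and
they are what is needed, entry by entry, for two boundaries to commute: one law for the entries
before both removed positions, one for those in between, one for those after. The laws are
symmetric under swapping `⊛` and `·`, which settles `d^⋆`, and they hold trivially when either
pair of operations is `(x, a) ↦ a`, which settles the boundaries that only delete an entry.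
-/

/-- The exchange laws between two pairs of operations: the conditions under which the boundary with
operations `s₁` (before the removed entry) and `d₁` (after it) commutes with the boundary with
operations `s₂` and `d₂`. In each law `x` and `y` are the two removed entries, `x` standing to the
left of `y`, and `a` is a remaining entry. -/
structure ExchangeLaws {X : Type*} (s₁ d₁ s₂ d₂ : X → X → X) : Prop where
  before : ∀ x y a, s₁ (s₂ y x) (s₂ y a) = s₂ (d₁ x y) (s₁ x a)
  between : ∀ x y a, d₁ (s₂ y x) (s₂ y a) = s₂ (d₁ x y) (d₁ x a)
  after : ∀ x y a, d₁ (s₂ y x) (d₂ y a) = d₂ (d₁ x y) (d₁ x a)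

namespace ExchangeLaws

variable {X : Type*} {s₁ d₁ s₂ d₂ : X → X → X}

theorem swap (h : ExchangeLaws s₁ d₁ s₂ d₂) : ExchangeLaws d₂ s₂ d₁ s₁ where
  before x y a := (h.after y x a).symm
  between x y a := (h.between y x a).symm
  after x y a := (h.before y x a).symm

theorem trivial_right (s d : X → X → X) : ExchangeLaws s d (fun _ a => a) (fun _ a => a) where
  before _ _ _ := rfl
  between _ _ _ := rfl
  after _ _ _ := rfl

theorem trivial_left (s d : X → X → X) : ExchangeLaws (fun _ a => a) (fun _ a => a) s d :=
  (trivial_right d s).swap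

end ExchangeLaws

section Boundaries

variable {X : Type*}

theorem exists_eq_append_cons_of_lt_length_s5 {k : ℕ} {xs : List X} (hk : k < xs.length) :
    ∃ (A : List X) (x : X) (B : List X), xs = A ++ x :: B ∧ A.length = k := by
  refine ⟨xs.take k, xs[k], xs.drop (k + 1), ?_, List.length_take_of_le hk.le⟩
  rw [← List.drop_eq_getElem_cons hk, List.take_append_drop]

theorem exists_eq_append_cons_append_cons {i j : ℕ} {xs : List X}
    (hi : 1 ≤ i) (hij : i < j) (hj : j ≤ xs.length) :
    ∃ (A B C : List X) (x y : X), xs = A ++ x :: (B ++ y :: C) ∧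
      i = A.length + 1 ∧ j = A.length + B.length + 2 := by
  obtain ⟨A, x, R, rfl, hA⟩ :=
    exists_eq_append_cons_of_lt_length_s5 (show i - 1 < xs.length by omega)
  rw [List.length_append, List.length_cons] at hj
  obtain ⟨B, y, C, rfl, hB⟩ :=
    exists_eq_append_cons_of_lt_length_s5 (show j - i - 1 < R.length by omega)
  exact ⟨A, B, C, x, y, rfl, by omega, by omega⟩

theorem dBr_append_cons (s d : X → X → X) {i : ℕ} {A : List X} (hi : i = A.length + 1)
    (x : X) (B : List X) : dBr s d i (A ++ x :: B) = A.map (s x) ++ B.map (d x) := by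
  subst hi
  simp [dBr, List.drop_append]

theorem dErase_eq_dBr {i : ℕ} (hi : 1 ≤ i) (xs : List X) :
    dErase i xs = dBr (fun _ a => a) (fun _ a => a) i xs := by
  obtain hlt | hle := lt_or_ge (i - 1) xs.length
  · simp [dErase, dBr, hlt, List.eraseIdx_eq_take_drop_succ, Nat.sub_add_cancel hi]
  · simp [dErase, dBr, hle, List.eraseIdx_of_length_le]

variable {i j : ℕ} {xs : List X}

theorem ExchangeLaws.dBr_dBr {s₁ d₁ s₂ d₂ : X → X → X} (h : ExchangeLaws s₁ d₁ s₂ d₂)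
    (hi : 1 ≤ i) (hij : i < j) (hj : j ≤ xs.length) :
    dBr s₁ d₁ i (dBr s₂ d₂ j xs) = dBr s₂ d₂ (j - 1) (dBr s₁ d₁ i xs) := by
  obtain ⟨A, B, C, x, y, rfl, hA, hB⟩ := exists_eq_append_cons_append_cons hi hij hj
  have remove_y : dBr s₂ d₂ j (A ++ x :: (B ++ y :: C))
      = A.map (s₂ y) ++ s₂ y x :: (B.map (s₂ y) ++ C.map (d₂ y)) := by
    rw [← List.cons_append, ← List.append_assoc, dBr_append_cons s₂ d₂ (by simp; omega)]
    simp
  have remove_x : dBr s₁ d₁ i (A ++ x :: (B ++ y :: C))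
      = (A.map (s₁ x) ++ B.map (d₁ x)) ++ d₁ x y :: C.map (d₁ x) := by
    rw [dBr_append_cons s₁ d₁ hA]
    simp
  rw [remove_y, remove_x, dBr_append_cons s₁ d₁ (by simpa using hA),
    dBr_append_cons s₂ d₂ (by simp; omega)]
  simp [Function.comp_def, h.before, h.between, h.after]

theorem dBr_dErase (s d : X → X → X) (hi : 1 ≤ i) (hij : i < j) (hj : j ≤ xs.length) :
    dBr s d i (dErase j xs) = dErase (j - 1) (dBr s d i xs) := by
  rw [dErase_eq_dBr (by omega), dErase_eq_dBr (by omega)]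
  exact (ExchangeLaws.trivial_right s d).dBr_dBr hi hij hj

theorem dErase_dBr (s d : X → X → X) (hi : 1 ≤ i) (hij : i < j) (hj : j ≤ xs.length) :
    dErase i (dBr s d j xs) = dBr s d (j - 1) (dErase i xs) := by
  rw [dErase_eq_dBr hi, dErase_eq_dBr hi]
  exact (ExchangeLaws.trivial_left s d).dBr_dBr hi hij hj

theorem dErase_dErase (hi : 1 ≤ i) (hij : i < j) (hj : j ≤ xs.length) :
    dErase i (dErase j xs) = dErase (j - 1) (dErase i xs) := by
  rw [dErase_eq_dBr hi xs, dErase_eq_dBr hi]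
  exact dBr_dErase _ _ hi hij hj

end Boundaries

/-- `star` and `dot` are the sideways operations of `σ`: they express the left input and the left
output of `σ` in terms of its right input and right output. Such operations exist precisely when
every map `a ↦ (σ (a, b)).2` is bijective. -/
def IsSideways {X : Type*} (σ : X × X → X × X) (star dot : X → X → X) : Prop :=
  ∀ u v c a, σ (u, v) = (c, a) ↔ star v a = u ∧ dot a v = c

namespace IsSideways

variable {X : Type*} {σ : X × X → X × X} {star dot : X → X → X}

theorem of_inverse (hstar1 : ∀ a b, (σ (star b a, b)).2 = a)
    (hstar2 : ∀ a b, star b (σ (a, b)).2 = a) (hdot : ∀ a b, dot a b = (σ (star b a, b)).1) :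
    IsSideways σ star dot := by
  intro u v c a
  constructor
  · intro h
    have hu : star v a = u := by simpa only [h] using hstar2 u v
    exact ⟨hu, by rw [hdot, hu, h]⟩
  · rintro ⟨rfl, rfl⟩
    exact Prod.ext (hdot a v).symm (hstar1 a v)

theorem apply_star (h : IsSideways σ star dot) (a v : X) : σ (star v a, v) = (dot a v, a) :=
  (h _ _ _ _).2 ⟨rfl, rfl⟩

theorem yangBaxter_apply (h : IsSideways σ star dot)
    (hYB : s12 σ ∘ s23 σ ∘ s12 σ = s23 σ ∘ s12 σ ∘ s23 σ) (x y w : X) :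
    star (dot x y) (star x w) = star (star y x) (star y w) ∧
      σ (dot (star y w) (star y x), dot w y) = (dot (star x w) (dot x y), dot w x) := by
  obtain ⟨p, q, hpq⟩ : ∃ p q, σ (star (star y x) (star y w), dot x y) = (p, q) :=
    ⟨_, _, rfl⟩
  have hσ := congrFun hYB (star (star y x) (star y w), star y x, y)
  simp only [Function.comp_apply, s12, s23, h.apply_star, hpq, Prod.mk.injEq] at hσ
  obtain ⟨left, right⟩ := hσ
  obtain ⟨rfl, middle⟩ := (h _ _ _ _).1 right.symm
  obtain ⟨hstar, rfl⟩ := (h _ _ _ _).1 hpq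
  exact ⟨hstar, Prod.ext left middle.symm⟩

theorem exchangeLaws (h : IsSideways σ star dot)
    (hYB : s12 σ ∘ s23 σ ∘ s12 σ = s23 σ ∘ s12 σ ∘ s23 σ) :
    ExchangeLaws star dot star dot := by
  have star_dot_dot_and_dot_dot_dot (x y w : X) :
      star (dot w y) (dot w x) = dot (star y w) (star y x) ∧
        dot (dot w x) (dot w y) = dot (star x w) (dot x y) :=
    (h _ _ _ _).1 (h.yangBaxter_apply hYB x y w).2
  exact
    { before := fun x y a => (h.yangBaxter_apply hYB x y a).1.symm
      between := fun x y a => (star_dot_dot_and_dot_dot_dot a y x).1.symm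
      after := fun x y a => (star_dot_dot_and_dot_dot_dot y a x).2.symm }

end IsSideways

theorem statement_5_general {X : Type*} (σ : X × X → X × X)
    (hYB : s12 σ ∘ s23 σ ∘ s12 σ = s23 σ ∘ s12 σ ∘ s23 σ)
    (star : X → X → X)
    (hstar1 : ∀ a b : X, (σ (star b a, b)).2 = a)
    (hstar2 : ∀ a b : X, star b ((σ (a, b)).2) = a)
    (dot : X → X → X)
    (hdot : ∀ a b : X, dot a b = (σ (star b a, b)).1) :
    ∀ (n i j : ℕ) (xs : List X), xs.length = n → 1 ≤ i → i < j → j ≤ n →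
      (dBr star dot i (dBr star dot j xs)
          = dBr star dot (j - 1) (dBr star dot i xs) ∧
        dBr star dot i (dErase j xs) = dErase (j - 1) (dBr star dot i xs) ∧
        dErase i (dBr star dot j xs) = dBr star dot (j - 1) (dErase i xs) ∧
        dErase i (dErase j xs) = dErase (j - 1) (dErase i xs)) ∧
      (dBr dot star i (dBr dot star j xs)
          = dBr dot star (j - 1) (dBr dot star i xs) ∧
        dBr dot star i (dErase j xs) = dErase (j - 1) (dBr dot star i xs) ∧
        dErase i (dBr dot star j xs) = dBr dot star (j - 1) (dErase i xs)) := by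
  rintro _ i j xs rfl hi hij hj
  have laws : ExchangeLaws star dot star dot :=
    (IsSideways.of_inverse hstar1 hstar2 hdot).exchangeLaws hYB
  exact ⟨⟨laws.dBr_dBr hi hij hj, dBr_dErase star dot hi hij hj, dErase_dBr star dot hi hij hj,
      dErase_dErase hi hij hj⟩,
    laws.swap.dBr_dBr hi hij hj, dBr_dErase dot star hi hij hj, dErase_dBr dot star hi hij hj⟩

/-- For a birack `(X, σ)` (with `b⊛a` the inverse of `a ↦ r(a,b)`
and `a·b := l(b⊛a, b)`), the families `(d'_i, d_i)` form a pre-cubical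
structure in Set, and the same holds with `d_i` replaced by `d_i^⋆`
(which exchanges the roles of `·` and `⊛`). -/
theorem statement_5 {X : Type*} (σ : X × X → X × X)
    (hYB : s12 σ ∘ s23 σ ∘ s12 σ = s23 σ ∘ s12 σ ∘ s23 σ)
    (hbij : Function.Bijective σ)
    (hrnd : ∀ b : X, Function.Bijective (fun a => (σ (b, a)).1))
    (star : X → X → X)
    (hstar1 : ∀ a b : X, (σ (star b a, b)).2 = a)
    (hstar2 : ∀ a b : X, star b ((σ (a, b)).2) = a)
    (dot : X → X → X)
    (hdot : ∀ a b : X, dot a b = (σ (star b a, b)).1) :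
    ∀ (n i j : ℕ) (xs : List X), xs.length = n → 1 ≤ i → i < j → j ≤ n →
      (dBr star dot i (dBr star dot j xs)
          = dBr star dot (j - 1) (dBr star dot i xs) ∧
        dBr star dot i (dErase j xs) = dErase (j - 1) (dBr star dot i xs) ∧
        dErase i (dBr star dot j xs) = dBr star dot (j - 1) (dErase i xs) ∧
        dErase i (dErase j xs) = dErase (j - 1) (dErase i xs)) ∧
      (dBr dot star i (dBr dot star j xs)
          = dBr dot star (j - 1) (dBr dot star i xs) ∧
        dBr dot star i (dErase j xs) = dErase (j - 1) (dBr dot star i xs) ∧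
        dErase i (dBr dot star j xs) = dBr dot star (j - 1) (dErase i xs)) :=
  statement_5_general σ hYB star hstar1 hstar2 dot hdot
end

section
/- Let (X, σ) be a birack satisfying a·a = a⊛a for all a ∈ X. Define s_i : Xⁿ → X^{n+1} by s_i(x₁,…,x_n) := (x₁,…,x_{i−1}, x_i, x_i, x_{i+1},…,x_n), and let d_i, d'_i, d_i^⋆ be the birack boundary maps d_i(x̄) = (x_i⊛x₁,…,x_i⊛x_{i−1}, x_i·x_{i+1},…,x_i·x_n), d'_i(x̄) = (x₁,…,x_{i−1},x_{i+1},…,x_n), d_i^⋆(x̄) = (x_i·x₁,…,x_i·x_{i−1}, x_i⊛x_{i+1},…,x_i⊛x_n). Then the following relations hold: s_i∘s_j = s_{j+1}∘s_i for i ≤ j; d_i∘s_j = s_{j−1}∘d_i and d'_i∘s_j = s_{j−1}∘d'_i for i < j; d_i∘s_j = s_j∘d_{i−1} and d'_i∘s_j = s_j∘d'_{i−1} for i > j+1; d'_i∘s_i = d'_{i+1}∘s_i = id; and d_i∘s_i = d_{i+1}∘s_i. The same relations hold with d_i replaced throughout by d_i^⋆. -/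
/-- The degeneracy `s_i(x₁,…,x_n) = (x₁,…,x_{i-1}, x_i, x_i, x_{i+1},…,x_n)`. -/
def sDup {X : Type*} (i : ℕ) (xs : List X) : List X :=
  match xs[i - 1]? with
  | some x => xs.take i ++ x :: xs.drop i
  | none => xs

/-! Each relation involves at most two marked entries, so write the tuple as `u ++ x :: v`, or as
`u ++ x :: v ++ y :: w`, with the marked entries exposed. Every map then acts by an explicit
formula, and the two sides of each relation evaluate to the same tuple. In `d_i ∘ s_i` and
`d_{i+1} ∘ s_i` the surviving copy of `x = x_i` becomes `x·x` and `x⊛x` respectively, and these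
agree by assumption. -/

section Splitting

variable {X : Type*}

theorem exists_eq_append_cons_of_le_length {i : ℕ} {xs : List X} (hi : 1 ≤ i)
    (hi' : i ≤ xs.length) : ∃ u x v, i = u.length + 1 ∧ xs = u ++ x :: v := by
  obtain ⟨k, rfl⟩ := Nat.exists_eq_add_of_le' hi
  refine ⟨xs.take k, xs[k], xs.drop (k + 1), ?_, ?_⟩
  · rw [List.length_take_of_le (by omega)]
  · rw [List.getElem_cons_drop, List.take_append_drop]

theorem exists_eq_append_cons_append_cons_of_lt {i j : ℕ} {xs : List X} (hi : 1 ≤ i) (hij : i < j)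
    (hj : j ≤ xs.length) :
    ∃ u x v y w, i = u.length + 1 ∧ j = (u ++ x :: v).length + 1 ∧
      xs = u ++ x :: v ++ y :: w := by
  obtain ⟨t, y, w, rfl, rfl⟩ := exists_eq_append_cons_of_le_length (hi.trans hij.le) hj
  obtain ⟨u, x, v, rfl, rfl⟩ := exists_eq_append_cons_of_le_length hi (Nat.lt_succ_iff.mp hij)
  exact ⟨u, x, v, y, w, rfl, rfl, rfl⟩

end Splitting

section Formulas

variable {X : Type*} {i : ℕ} {u : List X}

theorem sDup_append_cons (hi : i = u.length + 1) (x : X) (v : List X) :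
    sDup i (u ++ x :: v) = u ++ x :: x :: v := by
  subst hi
  simp [sDup, List.take_length_add_append, List.drop_length_add_append]

theorem dErase_append_cons (hi : i = u.length + 1) (x : X) (v : List X) :
    dErase i (u ++ x :: v) = u ++ v := by
  subst hi
  simp [dErase, List.eraseIdx_append]

theorem dBr_append_cons_s6 (hi : i = u.length + 1) (x : X) (v : List X) (f g : X → X → X) :
    dBr f g i (u ++ x :: v) = u.map (f x) ++ v.map (g x) := by
  subst hi
  simp [dBr, List.drop_length_add_append]

end Formulas

section Relations

variable {X : Type*} {i j : ℕ} {xs : List X} (f g : X → X → X)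

theorem sDup_sDup_self (hi : 1 ≤ i) (hi' : i ≤ xs.length) :
    sDup i (sDup i xs) = sDup (i + 1) (sDup i xs) := by
  obtain ⟨u, x, v, hiu, rfl⟩ := exists_eq_append_cons_of_le_length hi hi'
  have hiux : i + 1 = (u ++ [x]).length + 1 := by simp [hiu]
  calc sDup i (sDup i (u ++ x :: v))
    _ = u ++ [x] ++ x :: x :: v := by simp [sDup_append_cons hiu]
    _ = sDup (i + 1) (u ++ [x] ++ x :: v) := (sDup_append_cons hiux x v).symm
    _ = sDup (i + 1) (sDup i (u ++ x :: v)) := by simp [sDup_append_cons hiu]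

theorem sDup_sDup_of_lt (hi : 1 ≤ i) (hij : i < j) (hj : j ≤ xs.length) :
    sDup i (sDup j xs) = sDup (j + 1) (sDup i xs) := by
  obtain ⟨u, x, v, y, w, hiu, hju, rfl⟩ := exists_eq_append_cons_append_cons_of_lt hi hij hj
  have hju' : j + 1 = (u ++ x :: x :: v).length + 1 := by grind
  calc sDup i (sDup j (u ++ x :: v ++ y :: w))
    _ = u ++ x :: x :: v ++ y :: y :: w := by
      rw [sDup_append_cons hju]; simp [sDup_append_cons hiu]
    _ = sDup (j + 1) (u ++ x :: x :: v ++ y :: w) := (sDup_append_cons hju' y w).symm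
    _ = sDup (j + 1) (sDup i (u ++ x :: v ++ y :: w)) := by simp [sDup_append_cons hiu]

theorem sDup_sDup_of_le (hi : 1 ≤ i) (hij : i ≤ j) (hj : j ≤ xs.length) :
    sDup i (sDup j xs) = sDup (j + 1) (sDup i xs) := by
  obtain rfl | hlt := hij.eq_or_lt
  · exact sDup_sDup_self hi hj
  · exact sDup_sDup_of_lt hi hlt hj

theorem dBr_sDup_of_lt (hi : 1 ≤ i) (hij : i < j) (hj : j ≤ xs.length) :
    dBr f g i (sDup j xs) = sDup (j - 1) (dBr f g i xs) := by
  obtain ⟨u, x, v, y, w, hiu, hju, rfl⟩ := exists_eq_append_cons_append_cons_of_lt hi hij hj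
  have hju' : j - 1 = (u.map (f x) ++ v.map (g x)).length + 1 := by grind
  calc dBr f g i (sDup j (u ++ x :: v ++ y :: w))
    _ = u.map (f x) ++ v.map (g x) ++ g x y :: g x y :: w.map (g x) := by
      rw [sDup_append_cons hju]; simp [dBr_append_cons_s6 hiu]
    _ = sDup (j - 1) (u.map (f x) ++ v.map (g x) ++ g x y :: w.map (g x)) :=
      (sDup_append_cons hju' _ _).symm
    _ = sDup (j - 1) (dBr f g i (u ++ x :: v ++ y :: w)) := by simp [dBr_append_cons_s6 hiu]

theorem dErase_sDup_of_lt (hi : 1 ≤ i) (hij : i < j) (hj : j ≤ xs.length) :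
    dErase i (sDup j xs) = sDup (j - 1) (dErase i xs) := by
  obtain ⟨u, x, v, y, w, hiu, hju, rfl⟩ := exists_eq_append_cons_append_cons_of_lt hi hij hj
  have hju' : j - 1 = (u ++ v).length + 1 := by grind
  calc dErase i (sDup j (u ++ x :: v ++ y :: w))
    _ = u ++ v ++ y :: y :: w := by rw [sDup_append_cons hju]; simp [dErase_append_cons hiu]
    _ = sDup (j - 1) (u ++ v ++ y :: w) := (sDup_append_cons hju' y w).symm
    _ = sDup (j - 1) (dErase i (u ++ x :: v ++ y :: w)) := by simp [dErase_append_cons hiu]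

theorem dBr_succ_sDup_of_lt (hj : 1 ≤ j) (hji : j < i) (hi : i ≤ xs.length) :
    dBr f g (i + 1) (sDup j xs) = sDup j (dBr f g i xs) := by
  obtain ⟨u, x, v, y, w, hju, hiu, rfl⟩ := exists_eq_append_cons_append_cons_of_lt hj hji hi
  have hiu' : i + 1 = (u ++ x :: x :: v).length + 1 := by grind
  have hju' : j = (u.map (f y)).length + 1 := by simp [hju]
  calc dBr f g (i + 1) (sDup j (u ++ x :: v ++ y :: w))
    _ = dBr f g (i + 1) (u ++ x :: x :: v ++ y :: w) := by simp [sDup_append_cons hju]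
    _ = u.map (f y) ++ f y x :: f y x :: (v.map (f y) ++ w.map (g y)) := by
      rw [dBr_append_cons_s6 hiu']; simp
    _ = sDup j (u.map (f y) ++ f y x :: (v.map (f y) ++ w.map (g y))) :=
      (sDup_append_cons hju' _ _).symm
    _ = sDup j (dBr f g i (u ++ x :: v ++ y :: w)) := by rw [dBr_append_cons_s6 hiu]; simp

theorem dErase_succ_sDup_of_lt (hj : 1 ≤ j) (hji : j < i) (hi : i ≤ xs.length) :
    dErase (i + 1) (sDup j xs) = sDup j (dErase i xs) := by
  obtain ⟨u, x, v, y, w, hju, hiu, rfl⟩ := exists_eq_append_cons_append_cons_of_lt hj hji hi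
  have hiu' : i + 1 = (u ++ x :: x :: v).length + 1 := by grind
  calc dErase (i + 1) (sDup j (u ++ x :: v ++ y :: w))
    _ = dErase (i + 1) (u ++ x :: x :: v ++ y :: w) := by simp [sDup_append_cons hju]
    _ = u ++ x :: x :: v ++ w := dErase_append_cons hiu' y w
    _ = sDup j (u ++ x :: v ++ w) := by simp [sDup_append_cons hju]
    _ = sDup j (dErase i (u ++ x :: v ++ y :: w)) := by rw [dErase_append_cons hiu]

theorem dErase_sDup_self (hi : 1 ≤ i) (hi' : i ≤ xs.length) : dErase i (sDup i xs) = xs := by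
  obtain ⟨u, x, v, hiu, rfl⟩ := exists_eq_append_cons_of_le_length hi hi'
  rw [sDup_append_cons hiu, dErase_append_cons hiu]

theorem dErase_succ_sDup_self (hi : 1 ≤ i) (hi' : i ≤ xs.length) :
    dErase (i + 1) (sDup i xs) = xs := by
  obtain ⟨u, x, v, hiu, rfl⟩ := exists_eq_append_cons_of_le_length hi hi'
  have hiux : i + 1 = (u ++ [x]).length + 1 := by simp [hiu]
  rw [sDup_append_cons hiu, List.append_cons, dErase_append_cons hiux, ← List.append_cons]

variable {f g} in
theorem dBr_sDup_self (hfg : ∀ a, f a a = g a a) (hi : 1 ≤ i) (hi' : i ≤ xs.length) :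
    dBr f g i (sDup i xs) = dBr f g (i + 1) (sDup i xs) := by
  obtain ⟨u, x, v, hiu, rfl⟩ := exists_eq_append_cons_of_le_length hi hi'
  have hiux : i + 1 = (u ++ [x]).length + 1 := by simp [hiu]
  calc dBr f g i (sDup i (u ++ x :: v))
    _ = u.map (f x) ++ g x x :: v.map (g x) := by
      rw [sDup_append_cons hiu, dBr_append_cons_s6 hiu, List.map_cons]
    _ = u.map (f x) ++ f x x :: v.map (g x) := by rw [hfg]
    _ = dBr f g (i + 1) (u ++ [x] ++ x :: v) := by rw [dBr_append_cons_s6 hiux]; simp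
    _ = dBr f g (i + 1) (sDup i (u ++ x :: v)) := by
      rw [sDup_append_cons hiu, ← List.append_cons]

end Relations

theorem statement_6_general {X : Type*} (star dot : X → X → X)
    (hsq : ∀ a : X, dot a a = star a a) :
    (∀ (n i j : ℕ) (xs : List X), xs.length = n → 1 ≤ i → i ≤ j → j ≤ n →
        sDup i (sDup j xs) = sDup (j + 1) (sDup i xs)) ∧
    (∀ (n i j : ℕ) (xs : List X), xs.length = n → 1 ≤ i → i < j → j ≤ n →
        dBr star dot i (sDup j xs) = sDup (j - 1) (dBr star dot i xs) ∧
        dBr dot star i (sDup j xs) = sDup (j - 1) (dBr dot star i xs) ∧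
        dErase i (sDup j xs) = sDup (j - 1) (dErase i xs)) ∧
    (∀ (n i j : ℕ) (xs : List X), xs.length = n →
        1 ≤ j → j + 1 < i → i ≤ n + 1 →
        dBr star dot i (sDup j xs) = sDup j (dBr star dot (i - 1) xs) ∧
        dBr dot star i (sDup j xs) = sDup j (dBr dot star (i - 1) xs) ∧
        dErase i (sDup j xs) = sDup j (dErase (i - 1) xs)) ∧
    (∀ (n i : ℕ) (xs : List X), xs.length = n → 1 ≤ i → i ≤ n →
        dErase i (sDup i xs) = xs ∧
        dErase (i + 1) (sDup i xs) = xs ∧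
        dBr star dot i (sDup i xs) = dBr star dot (i + 1) (sDup i xs) ∧
        dBr dot star i (sDup i xs) = dBr dot star (i + 1) (sDup i xs)) := by
  refine ⟨?_, ?_, ?_, ?_⟩
  · rintro _ i j xs rfl hi hij hj
    exact sDup_sDup_of_le hi hij hj
  · rintro _ i j xs rfl hi hij hj
    exact ⟨dBr_sDup_of_lt star dot hi hij hj, dBr_sDup_of_lt dot star hi hij hj,
      dErase_sDup_of_lt hi hij hj⟩
  · rintro _ i j xs rfl hj hji hi
    obtain ⟨k, rfl⟩ := Nat.exists_eq_add_of_lt hji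
    have hjk : j < j + 1 + k := by omega
    have hk : j + 1 + k ≤ xs.length := Nat.le_of_succ_le_succ hi
    exact ⟨dBr_succ_sDup_of_lt star dot hj hjk hk, dBr_succ_sDup_of_lt dot star hj hjk hk,
      dErase_succ_sDup_of_lt hj hjk hk⟩
  · rintro _ i xs rfl hi hin
    exact ⟨dErase_sDup_self hi hin, dErase_succ_sDup_self hi hin,
      dBr_sDup_self (fun a => (hsq a).symm) hi hin, dBr_sDup_self hsq hi hin⟩

/-- For a birack `(X, σ)` with `a·a = a⊛a` for all `a`, the
duplication degeneracies `s_i` satisfy, together with the boundaries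
`d_i, d'_i` (and likewise with `d_i^⋆` in place of `d_i`), the cubical
relations listed. -/
theorem statement_6 {X : Type*} (σ : X × X → X × X)
    (hYB : s12 σ ∘ s23 σ ∘ s12 σ = s23 σ ∘ s12 σ ∘ s23 σ)
    (hbij : Function.Bijective σ)
    (hrnd : ∀ b : X, Function.Bijective (fun a => (σ (b, a)).1))
    (star : X → X → X)
    (hstar1 : ∀ a b : X, (σ (star b a, b)).2 = a)
    (hstar2 : ∀ a b : X, star b ((σ (a, b)).2) = a)
    (dot : X → X → X)
    (hdot : ∀ a b : X, dot a b = (σ (star b a, b)).1)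
    (hsq : ∀ a : X, dot a a = star a a) :
    (∀ (n i j : ℕ) (xs : List X), xs.length = n → 1 ≤ i → i ≤ j → j ≤ n →
        sDup i (sDup j xs) = sDup (j + 1) (sDup i xs)) ∧
    (∀ (n i j : ℕ) (xs : List X), xs.length = n → 1 ≤ i → i < j → j ≤ n →
        dBr star dot i (sDup j xs) = sDup (j - 1) (dBr star dot i xs) ∧
        dBr dot star i (sDup j xs) = sDup (j - 1) (dBr dot star i xs) ∧
        dErase i (sDup j xs) = sDup (j - 1) (dErase i xs)) ∧
    (∀ (n i j : ℕ) (xs : List X), xs.length = n →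
        1 ≤ j → j + 1 < i → i ≤ n + 1 →
        dBr star dot i (sDup j xs) = sDup j (dBr star dot (i - 1) xs) ∧
        dBr dot star i (sDup j xs) = sDup j (dBr dot star (i - 1) xs) ∧
        dErase i (sDup j xs) = sDup j (dErase (i - 1) xs)) ∧
    (∀ (n i : ℕ) (xs : List X), xs.length = n → 1 ≤ i → i ≤ n →
        dErase i (sDup i xs) = xs ∧
        dErase (i + 1) (sDup i xs) = xs ∧
        dBr star dot i (sDup i xs) = dBr star dot (i + 1) (sDup i xs) ∧
        dBr dot star i (sDup i xs) = dBr dot star (i + 1) (sDup i xs)) :=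
  statement_6_general star dot hsq
end

section
/- Let (X, σ) be a left non-degenerate braided set and define a ◃ b := r(b·a, b). Then: (1) ◃ is self-distributive, i.e., (a◃b)◃c = (a◃c)◃(b◃c) for all a, b, c ∈ X; (2) every right translation a ↦ a◃b (b ∈ X fixed) is a bijection of X — that is, (X, ◃) is a rack — if and only if σ is bijective. -/
/-!
Left non-degeneracy lets one write `σ (a, b) = (r(a,b)·b, r(a,b))`, so the Yang–Baxter equation
becomes three identities between `r`, `⊛` and `·`. They imply that both `a ↦ r(a,z)` and
`a ↦ c·a` are endomorphisms of `◃`, hence so is their composite `a ↦ r(c·a, c) = a ◃ c`, and this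
is self-distributivity. The same change of variables identifies `σ`, up to bijections, with the
shear `(a, b) ↦ (a·b, a)`, and `a ↦ a ◃ b` with `a ↦ b·a`, which gives the rack criterion.
-/

open Function

theorem bijective_shear_iff {α β γ : Type*} {f : α → β → γ} :
    Bijective (fun p : α × β => (f p.1 p.2, p.1)) ↔ ∀ a, Bijective (f a) := by
  refine ⟨fun hf a => ⟨fun b b' hbb' => ?_, fun c => ?_⟩, fun hf => ⟨?_, ?_⟩⟩
  · exact congrArg Prod.snd (hf.injective (a₁ := (a, b)) (a₂ := (a, b')) (congrArg (·, a) hbb'))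
  · obtain ⟨⟨a', b⟩, hab⟩ := hf.surjective (c, a)
    obtain ⟨hc, rfl⟩ := Prod.mk.inj hab
    exact ⟨b, hc⟩
  · rintro ⟨a, b⟩ ⟨a', b'⟩ hab
    obtain ⟨hb, rfl⟩ := Prod.mk.inj hab
    exact congrArg (a, ·) ((hf a).injective hb)
  · rintro ⟨c, a⟩
    obtain ⟨b, rfl⟩ := (hf a).surjective c
    exact ⟨(a, b), rfl⟩

/-- A left non-degenerate map `σ` on `X × X`; `star b` is the inverse of `a ↦ r(a,b)`, so that
`star b a` is `b⊛a`. It is carried as data, and the Yang–Baxter equation is not included: see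
`LeftNondegenerateMap.IsBraided`. -/
structure LeftNondegenerateMap (X : Type*) where
  toFun : X × X → X × X
  star : X → X → X
  snd_toFun_star : ∀ a b, (toFun (star b a, b)).2 = a
  star_snd_toFun : ∀ a b, star b (toFun (a, b)).2 = a

namespace LeftNondegenerateMap

variable {X : Type*} (σ : LeftNondegenerateMap X)

/-- The first component `l(a,b)` of `σ (a, b)`. -/
def l (a b : X) : X := (σ.toFun (a, b)).1

/-- The second component `r(a,b)` of `σ (a, b)`. -/
def r (a b : X) : X := (σ.toFun (a, b)).2

/-- The operation `a·b := l(b⊛a, b)`, which records the first component of `σ` as a function of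
the second component `a` and of the second argument `b`. -/
def dot (a b : X) : X := σ.l (σ.star b a) b

/-- The structure shelf operation `a ◃ b := r(b·a, b)`. -/
def tri (a b : X) : X := σ.r (σ.dot b a) b

/-- The Yang–Baxter equation for `σ`. -/
def IsBraided : Prop :=
  s12 σ.toFun ∘ s23 σ.toFun ∘ s12 σ.toFun = s23 σ.toFun ∘ s12 σ.toFun ∘ s23 σ.toFun

theorem r_star (a b : X) : σ.r (σ.star b a) b = a := σ.snd_toFun_star a b

theorem star_r (a b : X) : σ.star b (σ.r a b) = a := σ.star_snd_toFun a b

theorem l_eq_dot (a b : X) : σ.l a b = σ.dot (σ.r a b) b := by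
  rw [dot, star_r]

/-- The permutation `a ↦ r(a,b)` of `X`, with inverse `a ↦ b⊛a`. -/
def rEquiv (b : X) : X ≃ X where
  toFun a := σ.r a b
  invFun := σ.star b
  left_inv a := σ.star_r a b
  right_inv a := σ.r_star a b

/-- The change of variables `(a, b) ↦ (b⊛a, b)`, after which `σ` becomes the shear
`(a, b) ↦ (a·b, a)`. -/
def starEquiv : X × X ≃ X × X where
  toFun p := (σ.star p.2 p.1, p.2)
  invFun p := (σ.r p.1 p.2, p.2)
  left_inv p := Prod.ext (σ.r_star p.1 p.2) rfl
  right_inv p := Prod.ext (σ.star_r p.1 p.2) rfl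

theorem toFun_comp_starEquiv :
    σ.toFun ∘ σ.starEquiv = fun p => (σ.dot p.1 p.2, p.1) :=
  funext fun p => Prod.ext rfl (σ.r_star p.1 p.2)

theorem bijective_toFun_iff : Bijective σ.toFun ↔ ∀ a, Bijective (σ.dot a) := by
  rw [← σ.starEquiv.bijective_comp, toFun_comp_starEquiv, bijective_shear_iff]

theorem bijective_tri_iff (b : X) : Bijective (fun a => σ.tri a b) ↔ Bijective (σ.dot b) :=
  (σ.rEquiv b).comp_bijective (σ.dot b)

namespace IsBraided

variable {σ} (hσ : σ.IsBraided)
include hσ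

theorem r_r (x y z : X) : σ.r (σ.r x y) z = σ.r (σ.r x (σ.l y z)) (σ.r y z) :=
  congrArg (·.2.2) (congrFun hσ (x, y, z))

theorem r_l (x y z : X) :
    σ.r (σ.l x y) (σ.l (σ.r x y) z) = σ.l (σ.r x (σ.l y z)) (σ.r y z) :=
  congrArg (·.2.1) (congrFun hσ (x, y, z))

theorem l_l (x y z : X) : σ.l (σ.l x y) (σ.l (σ.r x y) z) = σ.l x (σ.l y z) :=
  congrArg (·.1) (congrFun hσ (x, y, z))

theorem r_dot (a b c : X) :
    σ.r (σ.dot a b) (σ.dot (σ.r a c) c) = σ.dot (σ.r a c) (σ.r b c) := by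
  have h := hσ.r_l (σ.star b a) b c
  rwa [σ.l_eq_dot (σ.r (σ.star b a) (σ.l b c)), ← hσ.r_r, σ.l_eq_dot (σ.star b a), r_star,
    σ.l_eq_dot a] at h

theorem r_star_star (a b c : X) :
    σ.r (σ.star (σ.star c b) (σ.star c a)) (σ.dot b c) = σ.star b a := by
  have h := hσ.r_r (σ.star (σ.star c b) (σ.star c a)) (σ.star c b) c
  rw [r_star, r_star, r_star, ← dot] at h
  exact (σ.star_r _ b).symm.trans (congrArg (σ.star b) h.symm)

-- For involutive `σ`, where `⊛` and `·` coincide, this is Rump's cycle set identity.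
theorem dot_dot (a b c : X) :
    σ.dot (σ.dot a b) (σ.dot a c) = σ.dot (σ.star b a) (σ.dot b c) := by
  have h := hσ.l_l (σ.star (σ.star c b) (σ.star c a)) (σ.star c b) c
  have h_dot := hσ.r_dot (σ.star c a) (σ.star c b) c
  simp only [l_eq_dot, r_star, hσ.r_star_star] at h h_dot
  rwa [h_dot] at h

theorem tri_r (a b c : X) : σ.tri (σ.r a c) (σ.r b c) = σ.r (σ.tri a b) c := by
  rw [tri, tri, ← hσ.r_dot, ← l_eq_dot, ← hσ.r_r]

theorem dot_tri (a b c : X) : σ.dot c (σ.tri a b) = σ.tri (σ.dot c a) (σ.dot c b) :=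
  calc σ.dot c (σ.r (σ.dot b a) b)
    _ = σ.r (σ.dot (σ.star b c) (σ.dot b a)) (σ.dot c b) := by
      simpa only [r_star] using (hσ.r_dot (σ.star b c) (σ.dot b a) b).symm
    _ = σ.r (σ.dot (σ.dot c b) (σ.dot c a)) (σ.dot c b) := by rw [hσ.dot_dot]

theorem tri_tri (a b c : X) : σ.tri (σ.tri a b) c = σ.tri (σ.tri a c) (σ.tri b c) :=
  calc σ.r (σ.dot c (σ.tri a b)) c
    _ = σ.r (σ.tri (σ.dot c a) (σ.dot c b)) c := by rw [hσ.dot_tri]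
    _ = σ.tri (σ.r (σ.dot c a) c) (σ.r (σ.dot c b) c) := (hσ.tri_r _ _ _).symm

end IsBraided

end LeftNondegenerateMap

/-- For a left non-degenerate braided set `(X, σ)` (with `b⊛a` the
inverse of `a ↦ r(a,b)`, `a·b := l(b⊛a, b)`, and `a ◃ b := r(b·a, b)`):
(1) `◃` is self-distributive; (2) all right translations of `◃` are bijective
(i.e. `(X, ◃)` is a rack) iff `σ` is bijective. -/
theorem statement_7 {X : Type*} (σ : X × X → X × X)
    (hYB : s12 σ ∘ s23 σ ∘ s12 σ = s23 σ ∘ s12 σ ∘ s23 σ)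
    (star : X → X → X)
    (hstar1 : ∀ a b : X, (σ (star b a, b)).2 = a)
    (hstar2 : ∀ a b : X, star b ((σ (a, b)).2) = a)
    (dot : X → X → X)
    (hdot : ∀ a b : X, dot a b = (σ (star b a, b)).1)
    (tri : X → X → X)
    (htri : ∀ a b : X, tri a b = (σ (dot b a, b)).2) :
    (∀ a b c : X, tri (tri a b) c = tri (tri a c) (tri b c)) ∧
    ((∀ b : X, Function.Bijective (fun a => tri a b))
      ↔ Function.Bijective σ) := by
  let τ : LeftNondegenerateMap X := ⟨σ, star, hstar1, hstar2⟩
  have hτ : τ.IsBraided := hYB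
  obtain rfl : dot = τ.dot := funext₂ hdot
  obtain rfl : tri = τ.tri := funext₂ htri
  exact ⟨hτ.tri_tri, (forall_congr' τ.bijective_tri_iff).trans τ.bijective_toFun_iff.symm⟩
end

section
/- Let (X, σ) be a left non-degenerate braided set and define a ◃ b := r(b·a, b). Then: (3) a◃b = a holds for all a, b ∈ X if and only if σ ∘ σ = id; (4) the following three conditions are equivalent: (a) a◃a = a for all a ∈ X; (b) there exists a map t : X → X with σ(t(a), a) = (t(a), a) for all a ∈ X; (c) a·a = a⊛a for all a ∈ X and σ(a·a, a) = (a·a, a) for all a ∈ X. -/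
/-!
By non-degeneracy every pair has the form `(b ⊛ a, b)`, and in these coordinates
`σ (b ⊛ a, b) = (a · b, a)`. Inverting `r(-, b)` in `r(b · a, b) = a` shows that
`a ◃ b = a` if and only if `b · a = b ⊛ a`. If this holds for all `a` and `b`, then `σ` exchanges
`(b ⊛ a, b)` and `(a ⊛ b, a)`, so it is involutive. On the diagonal, a pair `(x, a)` is fixed by `σ`
if and only if `x = a ⊛ a` and `a · a = a ⊛ a`.
-/

section LeftNondegenerate

variable {X : Type*} {σ : X × X → X × X} {star : X → X → X}

/-- Left non-degeneracy of `σ = (l, r)`, witnessed by the operation `b ⊛ a = star b a`: each map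
`r(-, b)` is a bijection with inverse `b ⊛ -`. -/
structure IsLeftNondegenerate (σ : X × X → X × X) (star : X → X → X) : Prop where
  rightInverse : ∀ b, Function.RightInverse (star b) fun a => (σ (a, b)).2
  leftInverse : ∀ b, Function.LeftInverse (star b) fun a => (σ (a, b)).2

/-- The operation `a · b = l(b ⊛ a, b)`, where `σ = (l, r)` and `b ⊛ a = star b a`. -/
def dotOp (σ : X × X → X × X) (star : X → X → X) (a b : X) : X :=
  (σ (star b a, b)).1

/-- The associated shelf operation `a ◃ b = r(b · a, b)`, where `σ = (l, r)`. -/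
def shelfOp (σ : X × X → X × X) (star : X → X → X) (a b : X) : X :=
  (σ (dotOp σ star b a, b)).2

namespace IsLeftNondegenerate

theorem snd_apply_eq_iff (h : IsLeftNondegenerate σ star) {x a b : X} :
    (σ (x, b)).2 = a ↔ x = star b a :=
  ⟨fun hx => hx ▸ (h.leftInverse b x).symm, fun hx => hx ▸ h.rightInverse b a⟩

theorem apply_star (h : IsLeftNondegenerate σ star) (a b : X) :
    σ (star b a, b) = (dotOp σ star a b, a) :=
  Prod.ext rfl (h.rightInverse b a)

theorem shelfOp_eq_left_iff (h : IsLeftNondegenerate σ star) {a b : X} :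
    shelfOp σ star a b = a ↔ dotOp σ star b a = star b a :=
  h.snd_apply_eq_iff

theorem forall_shelfOp_eq_left_iff_comp_self_eq_id (h : IsLeftNondegenerate σ star) :
    (∀ a b, shelfOp σ star a b = a) ↔ σ ∘ σ = id := by
  constructor
  · intro htrivial
    have hdot (a b : X) : dotOp σ star b a = star b a := h.shelfOp_eq_left_iff.mp (htrivial a b)
    funext ⟨x, b⟩
    obtain ⟨a, rfl⟩ := (h.leftInverse b).surjective x
    calc
      σ (σ (star b a, b)) = σ (star a b, a) := by rw [h.apply_star, hdot]
      _ = (star b a, b) := by rw [h.apply_star, hdot]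
  · intro hσ a b
    have hab : σ (dotOp σ star b a, b) = (star a b, a) := by
      rw [← h.apply_star]
      exact congrFun hσ (star a b, a)
    exact congrArg Prod.snd hab

theorem apply_eq_self_iff (h : IsLeftNondegenerate σ star) {x a : X} :
    σ (x, a) = (x, a) ↔ x = star a a ∧ dotOp σ star a a = star a a := by
  constructor
  · intro hx
    obtain rfl : x = star a a := h.snd_apply_eq_iff.mp (congrArg Prod.snd hx)
    exact ⟨rfl, congrArg Prod.fst hx⟩
  · rintro ⟨rfl, hdot⟩
    rw [h.apply_star, hdot]

theorem shelfOp_self_eq_iff_exists_apply_eq_self (h : IsLeftNondegenerate σ star) {a : X} :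
    shelfOp σ star a a = a ↔ ∃ x, σ (x, a) = (x, a) := by
  simp only [h.shelfOp_eq_left_iff, h.apply_eq_self_iff, exists_eq_left]

theorem shelfOp_self_eq_iff_apply_dotOp_eq_self (h : IsLeftNondegenerate σ star) {a : X} :
    shelfOp σ star a a = a ↔
      dotOp σ star a a = star a a ∧ σ (dotOp σ star a a, a) = (dotOp σ star a a, a) := by
  simp only [h.shelfOp_eq_left_iff, h.apply_eq_self_iff, and_self]

end IsLeftNondegenerate

end LeftNondegenerate

theorem statement_8_general {X : Type*} (σ : X × X → X × X)
    (star : X → X → X)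
    (hstar1 : ∀ a b : X, (σ (star b a, b)).2 = a)
    (hstar2 : ∀ a b : X, star b ((σ (a, b)).2) = a)
    (dot : X → X → X)
    (hdot : ∀ a b : X, dot a b = (σ (star b a, b)).1)
    (tri : X → X → X)
    (htri : ∀ a b : X, tri a b = (σ (dot b a, b)).2) :
    ((∀ a b : X, tri a b = a) ↔ σ ∘ σ = id) ∧
    ((∀ a : X, tri a a = a)
        ↔ ∃ t : X → X, ∀ a : X, σ (t a, a) = (t a, a)) ∧
    ((∀ a : X, tri a a = a)
        ↔ ((∀ a : X, dot a a = star a a) ∧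
           (∀ a : X, σ (dot a a, a) = (dot a a, a)))) := by
  obtain rfl : dot = dotOp σ star := funext₂ hdot
  obtain rfl : tri = shelfOp σ star := funext₂ htri
  have h : IsLeftNondegenerate σ star := ⟨fun b a => hstar1 a b, fun b a => hstar2 a b⟩
  refine ⟨h.forall_shelfOp_eq_left_iff_comp_self_eq_id, ?_, ?_⟩
  · simp only [h.shelfOp_self_eq_iff_exists_apply_eq_self, Classical.skolem]
  · simp only [h.shelfOp_self_eq_iff_apply_dotOp_eq_self, forall_and]

/-- For a left non-degenerate braided set `(X, σ)` with associated
shelf operation `a ◃ b := r(b·a, b)`: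
(3) `◃` is trivial iff `σ` is involutive;
(4) `◃` is idempotent iff `σ` is weakly RI-compatible, iff `σ` is weakly
RI-compatible with `t(a) = a·a = a⊛a`. -/
theorem statement_8 {X : Type*} (σ : X × X → X × X)
    (hYB : s12 σ ∘ s23 σ ∘ s12 σ = s23 σ ∘ s12 σ ∘ s23 σ)
    (star : X → X → X)
    (hstar1 : ∀ a b : X, (σ (star b a, b)).2 = a)
    (hstar2 : ∀ a b : X, star b ((σ (a, b)).2) = a)
    (dot : X → X → X)
    (hdot : ∀ a b : X, dot a b = (σ (star b a, b)).1)
    (tri : X → X → X)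
    (htri : ∀ a b : X, tri a b = (σ (dot b a, b)).2) :
    ((∀ a b : X, tri a b = a) ↔ σ ∘ σ = id) ∧
    ((∀ a : X, tri a a = a)
        ↔ ∃ t : X → X, ∀ a : X, σ (t a, a) = (t a, a)) ∧
    ((∀ a : X, tri a a = a)
        ↔ ((∀ a : X, dot a a = star a a) ∧
           (∀ a : X, σ (dot a a, a) = (dot a a, a)))) :=
  statement_8_general σ star hstar1 hstar2 dot hdot tri htri
end

section
/- Let (X, σ) be a left non-degenerate braided set, let ◃ be its associated shelf operation a◃b := r(b·a, b), and define σ'(a,b) := (b◃a, a). Then for every n ≥ 1 the n-guitar map J : Xⁿ → Xⁿ is a bijection, and J ∘ σ_i = σ'_i ∘ J for all 1 ≤ i ≤ n−1, where σ_i (resp. σ'_i) denotes σ (resp. σ') applied at positions (i, i+1) of Xⁿ and the identity elsewhere. -/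
/-- The guitar map `J`, with components `J_i = r(…r(r(x_i,x_{i+1}),x_{i+2})…,x_n)`. -/
def guitar {X : Type*} (σ : X × X → X × X) : List X → List X
  | [] => []
  | x :: t => (t.foldl (fun a b => (σ (a, b)).2) x) :: guitar σ t

/-! Write `σ(a, b) = (l(a, b), r(a, b))` and let a word `t = t₁ ⋯ t_k` act on `X` from the right by
`r(·, t_k) ∘ ⋯ ∘ r(·, t₁)`, so that each component of `J` is an entry acted on by the word after it.
Left non-degeneracy makes this action bijective, so the entries are recovered from right to left.
By the Yang–Baxter equation, applying `σ` inside `t` does not change its action, so `σ_i` leaves the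
components before position `i` unchanged. The equation also makes each `r(·, z)` an endomorphism of
`◃`, which carries `r(l(a, b), r(a, b)) = b ◃ r(a, b)` at positions `i, i + 1` through the rest of
the word. -/

/-- The first component `l(a, b)` of `σ(a, b)`. -/
def leftAct {X : Type*} (σ : X × X → X × X) (a b : X) : X := (σ (a, b)).1

/-- The second component `r(a, b)` of `σ(a, b)`, read as `b` acting on `a` from the right. -/
def rightAct {X : Type*} (σ : X × X → X × X) (a b : X) : X := (σ (a, b)).2

/-- The Yang–Baxter equation for `σ`. -/
def IsBraiding {X : Type*} (σ : X × X → X × X) : Prop :=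
  s12 σ ∘ s23 σ ∘ s12 σ = s23 σ ∘ s12 σ ∘ s23 σ

/-- Left non-degeneracy of `σ`: every right translation `r(·, b)` is a bijection. -/
def IsLeftNondegenerate_s9 {X : Type*} (σ : X × X → X × X) : Prop :=
  ∀ b, Function.Bijective (rightAct σ · b)

/-- `tri` is the shelf operation `◃` associated with `σ`. Substituting `b := r(x, a)` in
`a ◃ b = r(l(a ⊛ b, a), b)` eliminates the inverse translation `⊛`; when `σ` is left
non-degenerate the resulting equation determines `◃`. -/
def IsAssociatedShelf {X : Type*} (σ : X × X → X × X) (tri : X → X → X) : Prop :=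
  ∀ x a, tri a (rightAct σ x a) = rightAct σ (leftAct σ x a) (rightAct σ x a)

/-- The braiding `(a, b) ↦ (b ◃ a, a)` attached to a shelf operation `◃`. -/
def shelfBraiding {X : Type*} (tri : X → X → X) (p : X × X) : X × X := (tri p.2 p.1, p.1)

theorem foldl_injective {α β : Type*} {f : α → β → α} (hf : ∀ b, Function.Injective (f · b))
    (l : List β) : Function.Injective (l.foldl f) := by
  induction l with
  | nil => exact Function.injective_id
  | cons b l ih => exact ih.comp (hf b)

theorem foldl_surjective {α β : Type*} {f : α → β → α} (hf : ∀ b, Function.Surjective (f · b))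
    (l : List β) : Function.Surjective (l.foldl f) := by
  induction l with
  | nil => exact Function.surjective_id
  | cons b l ih => exact ih.comp (hf b)

section

variable {X : Type*} {σ : X × X → X × X} {tri : X → X → X}

theorem IsBraiding.rightAct_rightAct (hσ : IsBraiding σ) (x y z : X) :
    rightAct σ (rightAct σ x y) z =
      rightAct σ (rightAct σ x (leftAct σ y z)) (rightAct σ y z) :=
  congrArg (fun p => p.2.2) (congrFun hσ (x, y, z))

theorem IsBraiding.rightAct_leftAct (hσ : IsBraiding σ) (x y z : X) :
    rightAct σ (leftAct σ x y) (leftAct σ (rightAct σ x y) z) =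
      leftAct σ (rightAct σ x (leftAct σ y z)) (rightAct σ y z) :=
  congrArg (fun p => p.2.1) (congrFun hσ (x, y, z))

theorem IsAssociatedShelf.rightAct_tri (htri : IsAssociatedShelf σ tri) (hσ : IsBraiding σ)
    (hsurj : ∀ b, Function.Surjective (rightAct σ · b)) (a b z : X) :
    rightAct σ (tri a b) z = tri (rightAct σ a z) (rightAct σ b z) := by
  obtain ⟨x, rfl⟩ := hsurj a b
  let y := rightAct σ x (leftAct σ a z)
  have acted : rightAct σ (rightAct σ x a) z = rightAct σ y (rightAct σ a z) :=
    hσ.rightAct_rightAct x a z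
  calc rightAct σ (tri a (rightAct σ x a)) z
      = rightAct σ (rightAct σ (leftAct σ x a) (rightAct σ x a)) z := by rw [htri]
    _ = rightAct σ (rightAct σ (leftAct σ x a) (leftAct σ (rightAct σ x a) z))
          (rightAct σ (rightAct σ x a) z) := hσ.rightAct_rightAct _ _ _
    _ = rightAct σ (leftAct σ y (rightAct σ a z)) (rightAct σ y (rightAct σ a z)) := by
        rw [hσ.rightAct_leftAct, acted]
    _ = tri (rightAct σ a z) (rightAct σ y (rightAct σ a z)) := (htri _ _).symm
    _ = tri (rightAct σ a z) (rightAct σ (rightAct σ x a) z) := by rw [acted]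

theorem IsAssociatedShelf.foldl_rightAct_tri (htri : IsAssociatedShelf σ tri)
    (hσ : IsBraiding σ) (hsurj : ∀ b, Function.Surjective (rightAct σ · b))
    (l : List X) (a b : X) :
    l.foldl (rightAct σ) (tri a b) =
      tri (l.foldl (rightAct σ) a) (l.foldl (rightAct σ) b) :=
  List.foldl_hom₂ l tri _ _ _ a b fun a b z => (htri.rightAct_tri hσ hsurj a b z).symm

theorem IsBraiding.foldl_rightAct_applyAt (hσ : IsBraiding σ) (i : ℕ) (l : List X) (x : X) :
    (applyAt σ i l).foldl (rightAct σ) x = l.foldl (rightAct σ) x := by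
  induction i, l using applyAt.induct generalizing x with
  | case1 a b l => exact congrArg (l.foldl (rightAct σ)) (hσ.rightAct_rightAct x a b).symm
  | case2 _ a _ ih => exact ih (rightAct σ x a)
  | case3 => rw [applyAt] <;> assumption

theorem guitar_cons (x : X) (l : List X) :
    guitar σ (x :: l) = l.foldl (rightAct σ) x :: guitar σ l :=
  rfl

theorem length_guitar (l : List X) : (guitar σ l).length = l.length := by
  induction l with
  | nil => rfl
  | cons x l ih => rw [guitar_cons, List.length_cons, List.length_cons, ih]

theorem guitar_injective (hinj : ∀ b, Function.Injective (rightAct σ · b)) :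
    Function.Injective (guitar σ) := by
  intro l m h
  have hlen : l.length = m.length := by rw [← length_guitar (σ := σ), h, length_guitar]
  induction l generalizing m with
  | nil => exact (List.length_eq_zero_iff.mp hlen.symm).symm
  | cons x l ih =>
    obtain ⟨y, m, rfl⟩ := List.exists_cons_of_length_eq_add_one hlen.symm
    obtain ⟨head_eq, tail_eq⟩ := List.cons.inj h
    obtain rfl := ih tail_eq (Nat.succ.inj hlen)
    rw [foldl_injective hinj l head_eq]

theorem guitar_surjective (hsurj : ∀ b, Function.Surjective (rightAct σ · b)) :
    Function.Surjective (guitar σ) := by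
  intro m
  induction m with
  | nil => exact ⟨[], rfl⟩
  | cons y m ih =>
    obtain ⟨l, rfl⟩ := ih
    obtain ⟨x, rfl⟩ := foldl_surjective hsurj l y
    exact ⟨x :: l, rfl⟩

theorem IsLeftNondegenerate_s9.bijOn_guitar (hσ : IsLeftNondegenerate_s9 σ) (n : ℕ) :
    Set.BijOn (guitar σ) {l | l.length = n} {l | l.length = n} := by
  have preimage_eq : guitar σ ⁻¹' {l | l.length = n} = {l | l.length = n} := by
    ext l
    simp only [Set.mem_preimage, Set.mem_ofPred_eq, length_guitar]
  have bijective : Function.Bijective (guitar σ) :=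
    ⟨guitar_injective fun b => (hσ b).injective, guitar_surjective fun b => (hσ b).surjective⟩
  simpa only [preimage_eq] using bijective.bijOn_preimage (t := {l | l.length = n})

-- For `i` out of range, `applyAt` is the identity and both sides are `guitar σ l`.
theorem IsAssociatedShelf.guitar_applyAt (htri : IsAssociatedShelf σ tri) (hσ : IsBraiding σ)
    (hsurj : ∀ b, Function.Surjective (rightAct σ · b)) (i : ℕ) (l : List X) :
    guitar σ (applyAt σ i l) = applyAt (shelfBraiding tri) i (guitar σ l) := by
  match i, l with
  | 0, _ => simp [applyAt]
  | 1, [] => rfl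
  | 1, [_] => rfl
  | 1, a :: b :: l =>
    have head : l.foldl (rightAct σ) (rightAct σ (leftAct σ a b) (rightAct σ a b)) =
        tri (l.foldl (rightAct σ) b) (l.foldl (rightAct σ) (rightAct σ a b)) := by
      rw [← htri, htri.foldl_rightAct_tri hσ hsurj]
    exact congrArg (· :: l.foldl (rightAct σ) (rightAct σ a b) :: guitar σ l) head
  | i + 2, [] => rfl
  | i + 2, a :: l =>
    exact congrArg₂ List.cons (hσ.foldl_rightAct_applyAt (i + 1) l a)
      (htri.guitar_applyAt hσ hsurj (i + 1) l)

end

/-- For a left non-degenerate braided set `(X, σ)` with associated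
shelf `a ◃ b := r(b·a, b)` and `σ'(a,b) := (b◃a, a)`, the `n`-guitar map is a
bijection `Xⁿ → Xⁿ` for every `n ≥ 1`, and it entwines `σ_i` and `σ'_i` for
`1 ≤ i ≤ n-1`. -/
theorem statement_9 {X : Type*} (σ : X × X → X × X)
    (hYB : s12 σ ∘ s23 σ ∘ s12 σ = s23 σ ∘ s12 σ ∘ s23 σ)
    (star : X → X → X)
    (hstar1 : ∀ a b : X, (σ (star b a, b)).2 = a)
    (hstar2 : ∀ a b : X, star b ((σ (a, b)).2) = a)
    (dot : X → X → X)
    (hdot : ∀ a b : X, dot a b = (σ (star b a, b)).1)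
    (tri : X → X → X)
    (htri : ∀ a b : X, tri a b = (σ (dot b a, b)).2)
    (σ' : X × X → X × X)
    (hσ' : ∀ a b : X, σ' (a, b) = (tri b a, a)) :
    (∀ n : ℕ, 1 ≤ n →
      Set.BijOn (guitar σ) {l : List X | l.length = n} {l : List X | l.length = n}) ∧
    (∀ (n i : ℕ) (xs : List X), xs.length = n → 1 ≤ i → i ≤ n - 1 →
      guitar σ (applyAt σ i xs) = applyAt σ' i (guitar σ xs)) := by
  have hnd : IsLeftNondegenerate_s9 σ := fun b =>
    Function.bijective_iff_has_inverse.mpr ⟨star b, fun a => hstar2 a b, fun a => hstar1 a b⟩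
  have hshelf : IsAssociatedShelf σ tri := fun x a => by
    rw [htri, hdot, rightAct, hstar2]
    rfl
  obtain rfl : σ' = shelfBraiding tri := funext fun p => hσ' p.1 p.2
  exact ⟨fun n _ => hnd.bijOn_guitar n, fun _ i xs _ _ _ =>
    hshelf.guitar_applyAt hYB (fun b => (hnd b).surjective) i xs⟩
end
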